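/- arXiv:1107.3672 — 2 statements merged into one kernel-verified Lean document; each statement's English description precedes it below -/
import Mathlib

section
/- Let r, s be integers with r−1 ≤ s ≤ 2r−4 and let Σ ⊂ P^{r−1} be a nondegenerate integral projective curve of degree s with arithmetic genus π (necessarily π ≤ π₀ := s−r+1 by Castelnuovo's bound). Then: (i) h¹(Σ, O_Σ(i)) = 0 for all i ≥ 1; (ii) h¹(P^{r−1}, I_Σ(1)) = π₀−π; (iii) h¹(P^{r−1}, I_Σ(i)) ≤ max(0, h¹(P^{r−1}, I_Σ(i−1)) − 1) for all i ≥ 2; and consequently (iv) h¹(P^{r−1}, I_Σ(i)) ≤ max(0, π₀−π+1−i) for all i ≥ 1. -/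
/-!
The proof replaces sheaf cohomology by multiplication of functions. Let `F` be the fraction field of
`R / I` and let `W ⊆ F` be the space of linear forms divided by a fixed coordinate that does not
vanish on the curve. Then `Wⁱ` is isomorphic to `(R / I)_i`, and the space of sections of `O_Σ(i)`
is isomorphic to the saturation `satPow W i = ⋃ⱼ (W ^ (j + i) : W ^ j)`
(`h0Nat_eq_finrank_satPow`). So everything is a statement about the dimensions of `Wⁱ` and
`satPow W i`.

As in Castelnuovo's argument, these are compared in consecutive degrees by a hyperplane section. The
hyperplane used is the generic member `ℓ = f₁ - u f₂ - g` of a pencil, with coefficients in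
`K = k(u, g)`; here `f₁` is a linear parameter, found with associated primes and Artin-Rees
(`exists_isParameter_affineForms`), and `f₁, f₂ ∈ W` generate the function field. Its intersection
with the curve is one point with residue field `Ω = F(u)`, of degree `s` over `K`, and restriction
to it has kernel `ℓ * satPow W i` on `satPow W (i + 1)`
(`IsPencilField.inf_ker_pencilEval_le`). The role of general position is played by the fact that
`Ω / K` has no proper intermediate field (`IsPencilField.hasNoProperIntermediateField`): the
equation of `f₂` over `K` is obtained from the irreducible equation of a plane model of the curve by
a birational shear, and so is irreducible over `F(u)` apart from the factor `y - f₂`.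

For such an extension the Cauchy-Davenport inequality `dim A B ≥ dim A + dim B - 1` holds for
subspaces `A, B` with `A B ≠ Ω`. The image `V` of `W` in `Ω` has dimension `r - 1 > s / 2`, hence
`V² = Ω`. Therefore `dim satPow W i` grows by exactly `s` from degree `1` on, which gives (i) and
(ii), whereas `dim Wⁱ` grows by at least `s`. If it grows by exactly `s` once, a duality argument
with the Cauchy-Davenport inequality shows that it does so from then on
(`GenericSection.inf_ker_le_smul_pow_succ`), so that `Wⁱ⁺¹` is already saturated. This is (iii), and
(iv) follows by induction.
-/

open scoped BigOperators

noncomputable section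

/-- The homogeneous coordinate ring of `ℙ^{n-1}` over `ℂ`: polynomials in `n` variables. -/
abbrev MPoly (n : ℕ) : Type := MvPolynomial (Fin n) ℂ

/-- An ideal is homogeneous if it contains all homogeneous components of its members. -/
def IsHomogIdeal {n : ℕ} (I : Ideal (MPoly n)) : Prop :=
  ∀ f ∈ I, ∀ k : ℕ, MvPolynomial.homogeneousComponent k f ∈ I

/-- The degree-`k` graded piece of the homogeneous coordinate ring of the subscheme `V(I)`. -/
def degQ {n : ℕ} (I : Ideal (MPoly n)) (k : ℕ) : Submodule ℂ (MPoly n ⧸ I) :=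
  (MvPolynomial.homogeneousSubmodule (Fin n) ℂ k).map (Ideal.Quotient.mkₐ ℂ I).toLinearMap

/-- The graded pieces, indexed by `ℤ` (zero in negative degrees). -/
def degQZ {n : ℕ} (I : Ideal (MPoly n)) (t : ℤ) : Submodule ℂ (MPoly n ⧸ I) :=
  if 0 ≤ t then degQ I t.toNat else ⊥

/-- The Hilbert function of the closed subscheme `V(I) ⊆ ℙ^{n-1}`. -/
def hilbNat {n : ℕ} (I : Ideal (MPoly n)) (t : ℤ) : ℕ :=
  Module.finrank ℂ (degQZ I t)

/-- The Hilbert function, as an integer-valued function. -/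
def hilbZ {n : ℕ} (I : Ideal (MPoly n)) (t : ℤ) : ℤ := (hilbNat I t : ℤ)

/-- The irrelevant maximal ideal `(x_0, …, x_{n-1})`. -/
def mId (n : ℕ) : Ideal (MPoly n) := Ideal.span (Set.range MvPolynomial.X)

/-- The space of degree-`t` graded module homomorphisms `m^k → R/I`. -/
def gradedHomSub {n : ℕ} (I : Ideal (MPoly n)) (k : ℕ) (t : ℤ) :
    Submodule ℂ ((mId n ^ k : Ideal (MPoly n)) →ₗ[MPoly n] (MPoly n ⧸ I)) where
  carrier := {φ | ∀ (j : ℕ) (f : MPoly n) (hf : f ∈ mId n ^ k),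
    f ∈ MvPolynomial.homogeneousSubmodule (Fin n) ℂ j → φ ⟨f, hf⟩ ∈ degQZ I ((j : ℤ) + t)}
  add_mem' := by
    intro a b ha hb j f hf hj
    simpa using Submodule.add_mem _ (ha j f hf hj) (hb j f hf hj)
  zero_mem' := by
    intro j f hf hj
    simpa using Submodule.zero_mem _
  smul_mem' := by
    intro c φ hφ j f hf hj
    simpa using Submodule.smul_mem _ c (hφ j f hf hj)

/-- `h⁰(X, 𝒪_X(t))` for `X = V(I)`: the stable value of the dimensions of the graded Hom
modules `Hom(m^k, R/I)_t` (the Deligne formula for twisted global sections). -/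
def h0Nat {n : ℕ} (I : Ideal (MPoly n)) (t : ℤ) : ℕ :=
  ⨆ k : ℕ, Module.finrank ℂ (gradedHomSub I k t)

/-- `h¹(ℙ^{n-1}, 𝓘_X(t)) = h⁰(X, 𝒪_X(t)) − h_X(t)` (valid for the saturated ideal of `X`). -/
def h1INat {n : ℕ} (I : Ideal (MPoly n)) (t : ℤ) : ℕ := h0Nat I t - hilbNat I t

/-- The dimension over `ℂ` of the Hartshorne–Rao module `M(X) = ⊕_t H¹(ℙ, 𝓘_X(t))`. -/
def raoDim {n : ℕ} (I : Ideal (MPoly n)) : ℕ := ∑ᶠ t : ℤ, h1INat I t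

/-- Arithmetically Cohen–Macaulay (for an integral curve): the Hartshorne–Rao module vanishes. -/
def IsACM {n : ℕ} (I : Ideal (MPoly n)) : Prop := ∀ t : ℤ, h0Nat I t = hilbNat I t

/-- Saturation of an ideal with respect to the irrelevant maximal ideal. -/
def satIdeal {n : ℕ} (I : Ideal (MPoly n)) : Ideal (MPoly n) where
  carrier := {f | ∃ k : ℕ, ∀ j : Fin n, MvPolynomial.X j ^ k * f ∈ I}
  zero_mem' := ⟨0, fun j => by simpa using I.zero_mem⟩
  add_mem' := by
    rintro f g ⟨k, hk⟩ ⟨l, hl⟩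
    refine ⟨k + l, fun j => ?_⟩
    have h1 : MvPolynomial.X (R := ℂ) j ^ (k + l) * (f + g)
        = MvPolynomial.X j ^ l * (MvPolynomial.X j ^ k * f)
          + MvPolynomial.X j ^ k * (MvPolynomial.X j ^ l * g) := by ring
    rw [h1]
    exact I.add_mem (I.mul_mem_left _ (hk j)) (I.mul_mem_left _ (hl j))
  smul_mem' := by
    rintro c f ⟨k, hk⟩
    refine ⟨k, fun j => ?_⟩
    have h1 : MvPolynomial.X (R := ℂ) j ^ k * (c • f) = c * (MvPolynomial.X j ^ k * f) := by
      rw [smul_eq_mul]; ring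
    rw [h1]
    exact I.mul_mem_left _ (hk j)

/-- The hyperplane section of `V(I)` by the hyperplane `{ℓ = 0}`, as a closed subscheme
(its saturated homogeneous ideal). -/
def sect {n : ℕ} (I : Ideal (MPoly n)) (ℓ : MPoly n) : Ideal (MPoly n) :=
  satIdeal (I ⊔ Ideal.span {ℓ})

/-- A property `P` holds for a *general* `k`-tuple of linear forms (hyperplanes): it holds on a
nonempty Zariski-open subset of the space of coefficients. -/
def GenericForms (n k : ℕ) (P : (Fin k → MPoly n) → Prop) : Prop :=
  ∃ Q : MvPolynomial (Fin k × Fin n) ℂ, Q ≠ 0 ∧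
    ∀ c : Fin k → Fin n → ℂ, MvPolynomial.eval (fun p => c p.1 p.2) Q ≠ 0 →
      P fun t => ∑ j : Fin n, MvPolynomial.C (c t j) * MvPolynomial.X j

/-- `V(I) ⊆ ℙ^{n-1}` is nondegenerate: contained in no hyperplane. -/
def Nondeg {n : ℕ} (I : Ideal (MPoly n)) : Prop :=
  ∀ f ∈ MvPolynomial.homogeneousSubmodule (Fin n) ℂ 1, f ∈ I → f = 0

/-- `V(I)` is an integral curve: `I` homogeneous prime, with cone of Krull dimension 2. -/
def IsCurve {n : ℕ} (I : Ideal (MPoly n)) : Prop :=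
  IsHomogIdeal I ∧ I.IsPrime ∧ ringKrullDim (MPoly n ⧸ I) = 2

/-- `V(I)` is an integral surface: `I` homogeneous prime, with cone of Krull dimension 3. -/
def IsSurface {n : ℕ} (I : Ideal (MPoly n)) : Prop :=
  IsHomogIdeal I ∧ I.IsPrime ∧ ringKrullDim (MPoly n ⧸ I) = 3

/-- The curve `V(I)` has degree `d` and arithmetic genus `g`: its Hilbert polynomial is
`d·t + 1 − g`. -/
def CurveInv {n : ℕ} (I : Ideal (MPoly n)) (d g : ℤ) : Prop :=
  ∃ N : ℤ, ∀ t : ℤ, N ≤ t → hilbZ I t = d * t + 1 - g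

/-- The surface `V(I)` has degree `s`, sectional genus `π` and arithmetic genus `pa`:
its Hilbert polynomial is `s·choose(t+1, 2) + (1 − π)·t + 1 + pa`. -/
def SurfInv {n : ℕ} (I : Ideal (MPoly n)) (s π pa : ℤ) : Prop :=
  ∃ N : ℤ, ∀ t : ℤ, N ≤ t → hilbZ I t = s * (t * (t + 1) / 2) + (1 - π) * t + 1 + pa

/-- `V(IC)` is not contained in any integral surface of degree `< s`. -/
def NotInSurfDegLT {n : ℕ} (IC : Ideal (MPoly n)) (s : ℤ) : Prop :=
  ∀ (T : Ideal (MPoly n)) (s' π' pa' : ℤ), IsSurface T → SurfInv T s' π' pa' → s' < s →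
    ¬ T ≤ IC

/-- `V(IC)` is not contained in any integral surface of degree `s` with sectional genus `> π`. -/
def NotInSurfSecGT {n : ℕ} (IC : Ideal (MPoly n)) (s π : ℤ) : Prop :=
  ∀ (T : Ideal (MPoly n)) (π' pa' : ℤ), IsSurface T → SurfInv T s π' pa' → π < π' →
    ¬ T ≤ IC

/-- `V(IC)` is not contained in any integral surface of degree `s` with arithmetic genus `< p`. -/
def NotInSurfGenLT {n : ℕ} (IC : Ideal (MPoly n)) (s p : ℤ) : Prop :=
  ∀ (T : Ideal (MPoly n)) (π' pa' : ℤ), IsSurface T → SurfInv T s π' pa' → pa' < p →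
    ¬ T ≤ IC

/-- `binom2 z = z.choose 2` for integers. -/
def binom2 (z : ℤ) : ℤ := z * (z - 1) / 2

/-- The bound `G*(r,d,s,π,p)` of Di Gennaro–Franco, with `m = (d-1)/s`, `ε = (d-1) % s`. -/
def Gstar (r d s π p : ℤ) : ℤ :=
  binom2 ((d - 1) / s) * s + ((d - 1) / s) * ((d - 1) % s + π) - p
    + max 0 ((2 * π - (s - 1 - (d - 1) % s)) / 2)

/-- The numerical function `h_{r,d,s,π}`. -/
def hF (r d s π : ℤ) (i : ℤ) : ℤ :=
  if 1 ≤ i ∧ i ≤ (d - 1) / s then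
    1 - π + i * s - max 0 ((s - r + 1) - π - i + 1)
  else if i = (d - 1) / s + 1 then
    d - max 0 ((2 * π - (s - 1 - (d - 1) % s)) / 2)
  else if (d - 1) / s + 2 ≤ i then d
  else 0

/-- The threshold `d₀(r)`. -/
def d0 (r : ℤ) : ℤ :=
  if r ≤ 6 then 16 * (r - 2) * (2 * r - 3)
  else if r ≤ 11 then 8 * (r - 2) ^ 3
  else 2 ^ (r.toNat + 1)

end
noncomputable section

/-- The affine cone of `V(I)`: common zeroes of the elements of `I`. -/
def zeroCone {n : ℕ} (I : Ideal (MPoly n)) : Set (Fin n → ℂ) :=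
  {a | ∀ f ∈ I, MvPolynomial.eval a f = 0}

/-- Jacobian-criterion smoothness: at every nonzero point of the affine cone (of dimension `c`)
the gradients of the equations span a subspace of dimension `n - c`. -/
def IsSmooth {n : ℕ} (I : Ideal (MPoly n)) (c : ℕ) : Prop :=
  ∀ a ∈ zeroCone I, a ≠ 0 →
    Module.finrank ℂ (Submodule.span ℂ
      {g : Fin n → ℂ | ∃ f ∈ I, g = fun j => MvPolynomial.eval a (MvPolynomial.pderiv j f)})
      = n - c

/-- Castelnuovo's bound for the genus of a nondegenerate integral curve of degree `d`
in `ℙ^R`. -/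
def castelG (R d : ℤ) : ℤ :=
  binom2 ((d - 1) / (R - 1)) * (R - 1) + ((d - 1) / (R - 1)) * ((d - 1) % (R - 1))

/-- The ideal of the projective cone (from `ℙ^{n-1}` to `ℙ^n`) over `V(I)`. -/
def coneIdeal {n : ℕ} (I : Ideal (MPoly n)) : Ideal (MPoly (n + 1)) :=
  Ideal.map (MvPolynomial.rename (Fin.castSucc : Fin n → Fin (n + 1))) I

/-- `J` is the (saturated homogeneous) ideal of a line in `ℙ^{n-1}`: it is generated by
`n - 2` linearly independent linear forms. -/
def IsLineIdeal {n : ℕ} (J : Ideal (MPoly n)) : Prop :=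
  ∃ V : Submodule ℂ (MPoly n), V ≤ MvPolynomial.homogeneousSubmodule (Fin n) ℂ 1 ∧
    Module.finrank ℂ V = n - 2 ∧ J = Ideal.span (V : Set (MPoly n))

/-- `V(T) ⊆ ℙ^{n-1}` is a smooth rational normal scroll surface: a smooth nondegenerate
integral surface of minimal degree `n - 2` (with sectional and arithmetic genus `0`)
containing a line (which rules out the Veronese surface). -/
def IsSmoothRNScroll {n : ℕ} (T : Ideal (MPoly n)) : Prop :=
  IsSurface T ∧ Nondeg T ∧ IsSmooth T 3 ∧ SurfInv T ((n : ℤ) - 2) 0 0 ∧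
    ∃ J : Ideal (MPoly n), IsLineIdeal J ∧ T ≤ J

/-- The linear projection on points determined by the matrix `L`. -/
def projPt {nb ns : ℕ} (L : Fin ns → Fin nb → ℂ) (a : Fin nb → ℂ) : Fin ns → ℂ :=
  fun t => ∑ j, L t j * a j

/-- The substitution algebra homomorphism determined by the matrix `L` (pullback of the
linear projection `ℙ^{nb-1} ⇢ ℙ^{ns-1}`). -/
def substHom {nb ns : ℕ} (L : Fin ns → Fin nb → ℂ) : MPoly ns →ₐ[ℂ] MPoly nb :=
  MvPolynomial.aeval fun t => ∑ j, MvPolynomial.C (L t j) * MvPolynomial.X j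

/-- The linear projection given by `L` maps `V(I')` isomorphically onto `V(I)`: the center of
projection misses `V(I')`, `V(I)` is the image, and the projection is (projectively) bijective
from `V(I')` onto `V(I)`. -/
def IsIsoProjection {nb ns : ℕ} (L : Fin ns → Fin nb → ℂ)
    (I' : Ideal (MPoly nb)) (I : Ideal (MPoly ns)) : Prop :=
  I = I'.comap (substHom L) ∧
  (∀ a ∈ zeroCone I', a ≠ 0 → projPt L a ≠ 0) ∧
  (∀ a ∈ zeroCone I', ∀ b ∈ zeroCone I', a ≠ 0 → b ≠ 0 →
    (∃ c : ℂ, c ≠ 0 ∧ projPt L a = c • projPt L b) → ∃ c : ℂ, c ≠ 0 ∧ a = c • b) ∧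
  (∀ y ∈ zeroCone I, y ≠ 0 → ∃ a ∈ zeroCone I', a ≠ 0 ∧ ∃ c : ℂ, c ≠ 0 ∧ y = c • projPt L a)

/-- `t` bounds the Castelnuovo–Mumford regularity of the surface `V(I) ⊆ ℙ^{n-1}`:
for every `t' ≥ t`, `H^i(ℙ, 𝓘(t'-i)) = 0` for all `i ≥ 1`, expressed through the standard
inductive characterization by successive general hyperplane sections. -/
def IsRegBound {n : ℕ} (I : Ideal (MPoly n)) (t : ℤ) : Prop :=
  GenericForms n 2 fun L => ∀ t' : ℤ, t ≤ t' →
    h1INat I (t' - 1) = 0 ∧ h1INat (sect I (L 0)) (t' - 1) = 0 ∧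
      h1INat (sect (sect I (L 0)) (L 1)) (t' - 1) = 0

end

/-! ### The linear Cauchy–Davenport inequality -/

section CauchyDavenport

open Module
open scoped Pointwise

/-- The extension `Ω / K` has no intermediate field other than `K` and `Ω`. This includes the case
`K = Ω`, which `IsSimpleOrder (IntermediateField K Ω)` would exclude. -/
def HasNoProperIntermediateField (K Ω : Type*) [Field K] [Field Ω] [Algebra K Ω] : Prop :=
  ∀ H : IntermediateField K Ω, H = ⊥ ∨ H = ⊤

variable {K Ω : Type*} [Field K] [Field Ω] [Algebra K Ω]

theorem finrank_pointwise_smul {a : Ω} (ha : a ≠ 0) (A : Submodule K Ω) :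
    finrank K ↥(a • A) = finrank K A :=
  (Submodule.equivMapOfInjective (LinearMap.mulLeft K a)
    (mul_right_injective₀ ha) A).finrank_eq.symm

theorem eq_top_or_finrank_le_one_of_mul_le [Algebra.IsAlgebraic K Ω]
    (hprim : HasNoProperIntermediateField K Ω) {A B : Submodule K Ω} (hB : B ≠ ⊥)
    (hAB : A * B ≤ B) : B = ⊤ ∨ finrank K A ≤ 1 := by
  let stabilizer : Subalgebra K Ω := (B / B).toSubalgebra (Submodule.one_mem_div.2 le_rfl)
    fun x y hx hy b hb => by
      rw [mul_assoc]
      exact hx _ (hy b hb)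
  let H : IntermediateField K Ω :=
    stabilizer.toIntermediateField' (Subalgebra.isField_of_algebraic stabilizer)
  have hAH : A ≤ H.toSubalgebra.toSubmodule := Submodule.le_div_iff_mul_le.2 hAB
  rcases hprim H with hH | hH
  · right
    rw [hH] at hAH
    have : FiniteDimensional K (⊥ : IntermediateField K Ω).toSubalgebra.toSubmodule :=
      inferInstanceAs (FiniteDimensional K (⊥ : IntermediateField K Ω))
    exact (Submodule.finrank_mono hAH).trans_eq IntermediateField.finrank_bot
  · left
    obtain ⟨b, hb, hb0⟩ := Submodule.exists_mem_ne_zero_of_ne_bot hB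
    refine eq_top_iff.2 fun x _ => ?_
    have hx : x * b⁻¹ ∈ H := hH ▸ IntermediateField.mem_top
    simpa [hb0] using hx b hb

theorem exists_dyson_transform [FiniteDimensional K Ω] {A B : Submodule K Ω}
    (h1 : (1 : Ω) ∈ A) (hAB : ¬ A * B ≤ B) :
    ∃ A' B' : Submodule K Ω, (1 : Ω) ∈ A' ∧ A' < A ∧ B ≤ B' ∧ A' * B' ≤ A * B ∧
      finrank K A' + finrank K B' = finrank K A + finrank K B := by
  obtain ⟨a, ha, b, hb, hab⟩ : ∃ a ∈ A, ∃ b ∈ B, a * b ∉ B := by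
    simpa [Submodule.mul_le] using hAB
  have hb0 : b ≠ 0 := by
    rintro rfl
    simp at hab
  have hbB : ∀ x : Ω, x ∈ b⁻¹ • B ↔ b * x ∈ B := fun x => by
    rw [Submodule.mem_smul_iff_inv_mul_mem (inv_ne_zero hb0), inv_inv]
  refine ⟨A ⊓ b⁻¹ • B, b • A ⊔ B, ⟨h1, (hbB 1).2 (by simpa using hb)⟩,
    inf_le_left.lt_of_not_ge fun h => hab ?_, le_sup_right, ?_, ?_⟩
  · rw [mul_comm]
    exact (hbB a).1 (h ha).2
  · rw [Submodule.mul_sup]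
    refine sup_le ?_ (mul_le_mul' inf_le_left le_rfl)
    calc (A ⊓ b⁻¹ • B) * (b • A) ≤ (b⁻¹ • B) * (b • A) := mul_le_mul' inf_le_right le_rfl
      _ = A * B := by
        rw [← Submodule.span_singleton_mul, ← Submodule.span_singleton_mul, mul_mul_mul_comm,
          Submodule.span_mul_span, Set.singleton_mul_singleton, inv_mul_cancel₀ hb0,
          ← Submodule.one_eq_span, one_mul, mul_comm]
  · have hinf : b • (A ⊓ b⁻¹ • B) = b • A ⊓ B := by
      ext x
      simp only [Submodule.mem_inf, Submodule.mem_smul_iff_inv_mul_mem hb0, hbB,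
        mul_inv_cancel_left₀ hb0]
    rw [← finrank_pointwise_smul hb0 (A ⊓ b⁻¹ • B), hinf, add_comm,
      Submodule.finrank_sup_add_finrank_inf_eq, finrank_pointwise_smul hb0]

theorem linear_cauchy_davenport_of_one_mem [FiniteDimensional K Ω]
    (hprim : HasNoProperIntermediateField K Ω) (A B : Submodule K Ω) (h1 : (1 : Ω) ∈ A)
    (hB : B ≠ ⊥) : A * B = ⊤ ∨ finrank K A + finrank K B ≤ finrank K ↥(A * B) + 1 := by
  induction hn : finrank K A using Nat.strong_induction_on generalizing A B with
  | _ n ih =>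
  subst hn
  by_cases hAB : A * B ≤ B
  · have hBAB : B ≤ A * B := fun b hb => by simpa using Submodule.mul_mem_mul h1 hb
    rw [le_antisymm hAB hBAB]
    exact (eq_top_or_finrank_le_one_of_mul_le hprim hB hAB).imp_right fun h => by omega
  · obtain ⟨A', B', h1', hlt, hBB', hmul, hsum⟩ := exists_dyson_transform h1 hAB
    have hB' : B' ≠ ⊥ := fun h => hB (eq_bot_iff.2 (hBB'.trans_eq h))
    have hmono := Submodule.finrank_mono hmul
    refine (ih _ (Submodule.finrank_lt_finrank_of_lt hlt) A' B' h1' hB' rfl).imp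
      (fun h => top_unique (h.symm.trans_le hmul)) fun h => by omega

theorem linear_cauchy_davenport [FiniteDimensional K Ω]
    (hprim : HasNoProperIntermediateField K Ω) {A B : Submodule K Ω} (hA : A ≠ ⊥) (hB : B ≠ ⊥) :
    A * B = ⊤ ∨ finrank K A + finrank K B ≤ finrank K ↥(A * B) + 1 := by
  obtain ⟨a, ha, ha0⟩ := Submodule.exists_mem_ne_zero_of_ne_bot hA
  have h1 : (1 : Ω) ∈ a⁻¹ • A := by
    simpa [Submodule.mem_smul_iff_inv_mul_mem (inv_ne_zero ha0)] using ha
  have hmul : (a⁻¹ • A) * B = a⁻¹ • (A * B) := by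
    rw [← Submodule.span_singleton_mul, ← Submodule.span_singleton_mul, mul_assoc]
  have hcd := linear_cauchy_davenport_of_one_mem hprim _ B h1 hB
  rw [hmul, finrank_pointwise_smul (inv_ne_zero ha0),
    finrank_pointwise_smul (inv_ne_zero ha0)] at hcd
  refine hcd.imp_left fun h => eq_top_iff.2 fun x _ => ?_
  have hx : a⁻¹ * x ∈ a⁻¹ • (A * B) := h ▸ Submodule.mem_top
  simpa [Submodule.mem_smul_iff_inv_mul_mem (inv_ne_zero ha0), ha0] using hx

end CauchyDavenport

/-! ### Subspaces of algebras -/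

section PowMono

variable {R A : Type*} [CommSemiring R] [CommSemiring A] [Algebra R A]

theorem one_mem_submodule_pow {W : Submodule R A} (h1 : (1 : A) ∈ W) (i : ℕ) : (1 : A) ∈ W ^ i :=
  Submodule.one_le.1 (one_le_pow₀ (Submodule.one_le.2 h1))

theorem submodule_pow_mono {W : Submodule R A} (h1 : (1 : A) ∈ W) :
    Monotone fun i : ℕ => W ^ i :=
  fun _ _ hij => pow_le_pow_right₀ (Submodule.one_le.2 h1) hij

theorem submodule_pow_fg (W : Submodule R A) [Module.Finite R W] (i : ℕ) : (W ^ i).FG :=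
  (Module.Finite.iff_fg.1 ‹Module.Finite R W›).pow i

end PowMono

section BaseChange

open TensorProduct

variable {R A : Type*} (S : Type*) [CommSemiring R] [CommSemiring A] [Algebra R A]
  [CommSemiring S] [Algebra R S]

theorem submodule_baseChange_mul (E E' : Submodule R A) :
    (E * E').baseChange S = E.baseChange S * E'.baseChange S := by
  apply le_antisymm
  · rw [Submodule.baseChange_eq_span, Submodule.span_le]
    rintro _ ⟨f, hf, rfl⟩
    have hmul : E * E' ≤ ((E.baseChange S * E'.baseChange S).restrictScalars R).comap
        (TensorProduct.mk R S A 1) := by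
      refine Submodule.mul_le.2 fun a ha b hb => ?_
      simpa using Submodule.mul_mem_mul (Submodule.tmul_mem_baseChange_of_mem (1 : S) ha)
        (Submodule.tmul_mem_baseChange_of_mem (1 : S) hb)
    exact hmul hf
  · rw [Submodule.baseChange_eq_span S E, Submodule.baseChange_eq_span S E',
      Submodule.span_mul_span, Submodule.span_le]
    rintro _ ⟨_, ⟨a, ha, rfl⟩, _, ⟨b, hb, rfl⟩, rfl⟩
    simpa using Submodule.tmul_mem_baseChange_of_mem (1 : S) (Submodule.mul_mem_mul ha hb)

theorem submodule_baseChange_one : (1 : Submodule R A).baseChange S = 1 := by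
  simp only [Submodule.one_eq_span, Submodule.baseChange_span, Set.image_singleton,
    TensorProduct.mk_apply, Algebra.TensorProduct.one_def]

theorem submodule_baseChange_pow (E : Submodule R A) (n : ℕ) :
    (E ^ n).baseChange S = E.baseChange S ^ n := by
  induction n with
  | zero => simp only [pow_zero, submodule_baseChange_one]
  | succ n ih => rw [pow_succ, pow_succ, submodule_baseChange_mul, ih]

end BaseChange

section BaseChangeField

open Module

variable {k V : Type*} (K : Type*) [Field k] [AddCommGroup V] [Module k V] [Field K] [Algebra k K]

theorem finrank_submodule_baseChange (E : Submodule k V) :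
    finrank K (E.baseChange K) = finrank k E := by
  rw [← (Submodule.toBaseChange.toLinearEquiv K E).finrank_eq, Module.finrank_baseChange]

theorem submodule_baseChange_fg_iff (E : Submodule k V) : (E.baseChange K).FG ↔ E.FG := by
  rw [← Module.Finite.iff_fg, ← Module.Finite.iff_fg,
    ← Module.Finite.equiv_iff (Submodule.toBaseChange.toLinearEquiv K E)]
  exact ⟨fun _ => Module.Finite.of_finite_tensorProduct_of_faithfullyFlat K,
    fun _ => inferInstance⟩

theorem submodule_eq_of_baseChange_le {E E' : Submodule k V} (hE : E.FG) (hle : E' ≤ E)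
    (h : E.baseChange K ≤ E'.baseChange K) : E' = E := by
  have : FiniteDimensional k E := Module.Finite.iff_fg.2 hE
  have : FiniteDimensional k E' := Submodule.finiteDimensional_of_le hle
  have : FiniteDimensional K (E'.baseChange K) :=
    Module.Finite.iff_fg.2 ((submodule_baseChange_fg_iff K E').2 (Module.Finite.iff_fg.1 this))
  refine Submodule.eq_of_le_of_finrank_le hle ?_
  rw [← finrank_submodule_baseChange K E, ← finrank_submodule_baseChange K E']
  exact Submodule.finrank_mono h

end BaseChangeField

section Duality

open Module

theorem finrank_map_add_finrank_inf_ker {K M N : Type*} [Field K] [AddCommGroup M] [Module K M]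
    [AddCommGroup N] [Module K N] (g : M →ₗ[K] N) (E : Submodule K M) [FiniteDimensional K E] :
    finrank K (E.map g) + finrank K ↥(E ⊓ LinearMap.ker g) = finrank K E := by
  have h := LinearMap.finrank_range_add_finrank_ker (g.domRestrict E)
  rw [LinearMap.range_domRestrict, LinearMap.ker_domRestrict] at h
  rw [← h, ← Submodule.map_comap_subtype]
  exact congrArg _ (Submodule.finrank_map_subtype_eq E _)

variable {K Ω : Type*} [Field K] [Field Ω] [Algebra K Ω]

/-- The symmetric bilinear form `(x, y) ↦ τ (x y)` on a field extension. -/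
noncomputable def mulForm (τ : Ω →ₗ[K] K) : LinearMap.BilinForm K Ω :=
  (LinearMap.mul K Ω).compr₂ τ

theorem mulForm_apply (τ : Ω →ₗ[K] K) (x y : Ω) : mulForm τ x y = τ (x * y) := rfl

theorem nondegenerate_mulForm {τ : Ω →ₗ[K] K} (hτ : τ ≠ 0) : (mulForm τ).Nondegenerate := by
  have key : ∀ x : Ω, (∀ y, τ (x * y) = 0) → x = 0 := by
    intro x hx
    by_contra h0
    refine hτ (LinearMap.ext fun z => ?_)
    simpa [mul_inv_cancel_left₀ h0] using hx (x⁻¹ * z)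
  exact ⟨fun x hx => key x hx, fun x hx => key x fun y => by rw [mul_comm]; exact hx y⟩

variable [FiniteDimensional K Ω]

theorem finrank_add_finrank_le_of_mul_le_ker {τ : Ω →ₗ[K] K} (hτ : τ ≠ 0) {U V : Submodule K Ω}
    (h : U * V ≤ LinearMap.ker τ) : finrank K U + finrank K V ≤ finrank K Ω := by
  have horth := LinearMap.BilinForm.finrank_orthogonal (nondegenerate_mulForm hτ) V
  have hU : U ≤ (mulForm τ).orthogonal V := fun u hu v hv => by
    rw [mulForm_apply, mul_comm]
    exact h (Submodule.mul_mem_mul hu hv)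
  have hle := Submodule.finrank_mono hU
  have hV := Submodule.finrank_le V
  omega

theorem mul_eq_top_of_finrank_lt {U V : Submodule K Ω}
    (h : finrank K Ω < finrank K U + finrank K V) : U * V = ⊤ := by
  by_contra hne
  obtain ⟨τ, hτ, hle⟩ := Submodule.exists_le_ker_of_lt_top _ (lt_top_iff_ne_top.2 hne)
  exact h.not_ge (finrank_add_finrank_le_of_mul_le_ker hτ hle)

end Duality

/-! ### Saturation -/

section Saturation

open Module

variable {R A : Type*} [CommSemiring R] [CommSemiring A] [Algebra R A] {W : Submodule R A}

/-- The degree `t` part of the saturation of the graded algebra `⨁ Wⁱ`: the elements `f` with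
`f Wʲ ⊆ Wʲ⁺ᵗ` for some `j`. For the space `W` of linear forms on a projective scheme, divided by a
fixed one, this is the space of sections of `𝒪(t)`. -/
def satPow (W : Submodule R A) (t : ℕ) : Submodule R A := ⨆ j : ℕ, W ^ (j + t) / W ^ j

theorem monotone_pow_add_div_pow (W : Submodule R A) (t : ℕ) :
    Monotone fun j : ℕ => W ^ (j + t) / W ^ j := by
  refine monotone_nat_of_le_succ fun j => Submodule.le_div_iff_mul_le.2 ?_
  calc W ^ (j + t) / W ^ j * W ^ (j + 1) = W ^ (j + t) / W ^ j * W ^ j * W := by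
        rw [pow_succ, mul_assoc]
    _ ≤ W ^ (j + t) * W := mul_le_mul' (Submodule.le_div_iff_mul_le.1 le_rfl) le_rfl
    _ = W ^ (j + 1 + t) := by rw [← pow_succ, add_right_comm]

theorem mem_satPow {t : ℕ} {f : A} :
    f ∈ satPow W t ↔ ∃ j : ℕ, ∀ y ∈ W ^ j, f * y ∈ W ^ (j + t) := by
  simp only [satPow, Submodule.mem_div_iff_forall_mul_mem,
    Submodule.mem_iSup_of_directed _ (monotone_pow_add_div_pow W t).directed_le]

theorem exists_mul_pow_le_of_fg {t : ℕ} {E : Submodule R A} (hE : E.FG) (h : E ≤ satPow W t) :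
    ∃ j : ℕ, E * W ^ j ≤ W ^ (j + t) := by
  obtain ⟨_, ⟨j, rfl⟩, hj⟩ := (CompleteLattice.isCompactElement_iff_le_of_directed_sSup_le _ E).1
    ((Submodule.fg_iff_compact E).1 hE) _ (Set.range_nonempty _)
    (monotone_pow_add_div_pow W t).directed_le.directedOn_range h
  exact ⟨j, Submodule.le_div_iff_mul_le.1 hj⟩

theorem pow_le_satPow (W : Submodule R A) (t : ℕ) : W ^ t ≤ satPow W t := fun f hf =>
  mem_satPow.2 ⟨0, fun y hy => by
    rw [add_comm, pow_add]
    exact Submodule.mul_mem_mul hf hy⟩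

theorem pow_mul_satPow_le (W : Submodule R A) (i t : ℕ) :
    W ^ i * satPow W t ≤ satPow W (i + t) := by
  refine Submodule.mul_le.2 fun a ha b hb => ?_
  obtain ⟨j, hj⟩ := mem_satPow.1 hb
  refine mem_satPow.2 ⟨j, fun y hy => ?_⟩
  rw [mul_assoc, add_left_comm, pow_add]
  exact Submodule.mul_mem_mul ha (hj y hy)

theorem mul_satPow_le (W : Submodule R A) (t : ℕ) : W * satPow W t ≤ satPow W (t + 1) := by
  simpa only [pow_one, add_comm 1] using pow_mul_satPow_le W 1 t

theorem satPow_mono (h1 : (1 : A) ∈ W) : Monotone (satPow W) := fun i t hit f hf => by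
  obtain ⟨j, hj⟩ := mem_satPow.1 hf
  exact mem_satPow.2 ⟨j, fun y hy => submodule_pow_mono h1 (by omega) (hj y hy)⟩

theorem mem_one_of_forall_mul_mem {k F : Type*} [Field k] [IsAlgClosed k] [CommRing F] [IsDomain F]
    [Algebra k F] {E : Submodule k F} [FiniteDimensional k E] (hE : E ≠ ⊥) {f : F}
    (hf : ∀ y ∈ E, f * y ∈ E) : f ∈ (1 : Submodule k F) := by
  have : Nontrivial E := Submodule.nontrivial_iff_ne_bot.2 hE
  let φ : Module.End k E := (LinearMap.mulLeft k f).restrict hf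
  obtain ⟨c, hc⟩ := Module.End.exists_eigenvalue φ
  obtain ⟨v, hv⟩ := hc.exists_hasEigenvector
  have hfv : f * v = algebraMap k F c * v := by
    rw [← Algebra.smul_def]
    exact congrArg Subtype.val hv.apply_eq_smul
  rw [mul_right_cancel₀ (fun h => hv.2 (Subtype.ext h)) hfv]
  exact Submodule.algebraMap_mem c

theorem satPow_zero {k F : Type*} [Field k] [IsAlgClosed k] [CommRing F] [IsDomain F] [Algebra k F]
    {W : Submodule k F} [FiniteDimensional k W] (h1 : (1 : F) ∈ W) : satPow W 0 = 1 := by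
  refine le_antisymm (fun f hf => ?_) (by simpa using pow_le_satPow W 0)
  obtain ⟨j, hj⟩ := mem_satPow.1 hf
  have : FiniteDimensional k ↥(W ^ j) := Module.Finite.iff_fg.2 (submodule_pow_fg W j)
  exact mem_one_of_forall_mul_mem
    (Submodule.ne_bot_iff _ |>.2 ⟨1, one_mem_submodule_pow h1 j, one_ne_zero⟩) hj

end Saturation

/-! ### Propagation of exactness -/

section Propagation

open Module
open scoped Pointwise

variable {K A Ω : Type*} [Field K] [CommRing A] [Algebra K A] [Field Ω] [Algebra K Ω]
  {ev : A →ₐ[K] Ω} {P R : Submodule K A}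

theorem finrank_le_finrank_map_add_one [FiniteDimensional K P]
    (hker : finrank K ↥(P ⊓ LinearMap.ker ev.toLinearMap) ≤ 1) :
    finrank K P ≤ finrank K (P.map ev.toLinearMap) + 1 := by
  have := finrank_map_add_finrank_inf_ker ev.toLinearMap P
  omega

variable [FiniteDimensional K Ω]

theorem exists_functional_mul_eq {τ : Ω →ₗ[K] K} (hτ : τ ≠ 0)
    (hR : R.map ev.toLinearMap = ⊤) {χ : A →ₗ[K] K}
    (hχ : ∀ x ∈ P, ∀ z ∈ R, ev z = 0 → χ (x * z) = 0) :
    ∃ D : A →ₗ[K] Ω, ∀ x ∈ P, ∀ z ∈ R, χ (x * z) = τ (D x * ev z) := by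
  obtain ⟨σ, hσ⟩ := LinearMap.exists_rightInverse_of_surjective
    (ev.toLinearMap.domRestrict R) (by rw [LinearMap.range_domRestrict, hR])
  have hevσ : ∀ ω, ev (σ ω : A) = ω := LinearMap.congr_fun hσ
  let toDual := (mulForm τ).toDual (nondegenerate_mulForm hτ)
  let G : A →ₗ[K] Module.Dual K Ω :=
    ((LinearMap.mul K A).compl₂ (R.subtype ∘ₗ σ)).compr₂ χ
  refine ⟨toDual.symm.toLinearMap ∘ₗ G, fun x hx z hz => ?_⟩
  have hlift := hχ x hx (z - σ (ev z)) (R.sub_mem hz (σ (ev z)).2) (by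
    rw [map_sub, hevσ, sub_self])
  rw [mul_sub, map_sub, sub_eq_zero] at hlift
  rw [hlift]
  exact (LinearMap.BilinForm.apply_toDual_symm_apply (hB := nondegenerate_mulForm hτ)
    (G x) (ev z)).symm

variable [FiniteDimensional K P] (hprim : HasNoProperIntermediateField K Ω) (h1 : (1 : A) ∈ P)
  (hker : finrank K ↥(P ⊓ LinearMap.ker ev.toLinearMap) ≤ 1)
  (hdim : finrank K Ω + 4 ≤ 2 * finrank K P)
include hprim h1 hker hdim

/-- By symmetry the image of `D` is `τ`-orthogonal to `ev (ker D) * ev P`, which is too large by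
the Cauchy–Davenport inequality unless `D` vanishes on `P`. -/
theorem le_ker_of_symmetric {τ : Ω →ₗ[K] K} (hτ : τ ≠ 0) {D : A →ₗ[K] Ω} (hD1 : D 1 = 0)
    (hsymm : ∀ x ∈ P, ∀ y ∈ P, ∀ v ∈ P,
      τ (D x * (ev y * ev v)) = τ (D y * (ev x * ev v))) :
    P ≤ LinearMap.ker D := by
  set V := P.map ev.toLinearMap
  set N := (P ⊓ LinearMap.ker D).map ev.toLinearMap
  have horth : P.map D * (N * V) ≤ LinearMap.ker τ := by
    rw [mul_comm, Submodule.mul_le]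
    rintro m hm _ ⟨x, hx, rfl⟩
    have hNV : N * V ≤ LinearMap.ker (τ ∘ₗ LinearMap.mulLeft K (D x)) := by
      rw [Submodule.mul_le]
      rintro _ ⟨y, ⟨hy, hDy⟩, rfl⟩ _ ⟨v, hv, rfl⟩
      have hDy' : D y = 0 := hDy
      simpa [hDy'] using hsymm x hx y hy v hv
    simpa [mul_comm m] using hNV hm
  have hrankD := finrank_map_add_finrank_inf_ker D P
  have hrankN : finrank K N + _ = _ :=
    finrank_map_add_finrank_inf_ker ev.toLinearMap (P ⊓ LinearMap.ker D)
  have hkerN : finrank K ↥(P ⊓ LinearMap.ker D ⊓ LinearMap.ker ev.toLinearMap) ≤ 1 :=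
    (Submodule.finrank_mono (inf_le_inf_right _ inf_le_left)).trans hker
  have hrankV : finrank K P ≤ finrank K V + 1 := finrank_le_finrank_map_add_one hker
  have hNbot : N ≠ ⊥ :=
    (Submodule.ne_bot_iff _).2 ⟨1, ⟨1, ⟨h1, hD1⟩, map_one ev⟩, one_ne_zero⟩
  have hVbot : V ≠ ⊥ := (Submodule.ne_bot_iff _).2 ⟨1, ⟨1, h1, map_one ev⟩, one_ne_zero⟩
  have hperp := finrank_add_finrank_le_of_mul_le_ker hτ horth
  have hbot : P.map D = ⊥ := by
    rcases linear_cauchy_davenport hprim hNbot hVbot with htop | hle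
    · rw [htop, finrank_top] at hperp
      exact Submodule.finrank_eq_zero.1 (by omega)
    · omega
  exact LinearMap.le_ker_iff_map.2 hbot

/-- A functional on `P * (P * R)` depending on `z` only through `ev z` is `x * z ↦ τ (D x * ev z)`
for some `D`. Subtracting `x ↦ D 1 * ev x` makes `D` vanish at `1`, hence on `P`. -/
theorem mul_inf_ker_le_ker {χ : A →ₗ[K] K}
    (hχ : ∀ x ∈ P, ∀ z ∈ P * R, ev z = 0 → χ (x * z) = 0) (hPR : P ≤ R) :
    P * (P * R) ⊓ LinearMap.ker ev.toLinearMap ≤ LinearMap.ker χ := by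
  have hsurj : (P * R).map ev.toLinearMap = ⊤ := by
    have hrank := finrank_le_finrank_map_add_one hker
    rw [eq_top_iff, ← mul_eq_top_of_finrank_lt (U := P.map ev.toLinearMap)
      (V := P.map ev.toLinearMap) (by omega), ← Submodule.map_mul]
    exact Submodule.map_mono (mul_le_mul' le_rfl hPR)
  obtain ⟨τ, hτ⟩ := exists_ne (0 : Module.Dual K Ω)
  obtain ⟨D, hD⟩ := exists_functional_mul_eq hτ hsurj hχ
  let D' : A →ₗ[K] Ω := D - LinearMap.mulLeft K (D 1) ∘ₗ ev.toLinearMap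
  have hD' : ∀ x, D' x = D x - D 1 * ev x := fun _ => rfl
  have hDP : P ≤ LinearMap.ker D' := by
    refine le_ker_of_symmetric hprim h1 hker hdim hτ (by simp [hD']) fun x hx y hy v hv => ?_
    have hxy := hD x hx (y * v) (Submodule.mul_mem_mul hy (hPR hv))
    rw [mul_left_comm, hD y hy (x * v) (Submodule.mul_mem_mul hx (hPR hv)), map_mul ev,
      map_mul ev] at hxy
    simp only [hD', sub_mul, map_sub, hxy, mul_assoc, mul_left_comm (ev x)]
  have hfactor : P * (P * R) ≤
      LinearMap.ker (χ - τ ∘ₗ LinearMap.mulLeft K (D 1) ∘ₗ ev.toLinearMap) := by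
    refine Submodule.mul_le.2 fun x hx z hz => ?_
    have hDx : D x = D 1 * ev x := sub_eq_zero.1 (hDP hx)
    simp [hD x hx z hz, hDx, mul_assoc]
  rintro ζ ⟨hζ, hevζ⟩
  have hevζ' : ev ζ = 0 := hevζ
  simpa [hevζ'] using hfactor hζ

theorem mul_inf_ker_le_smul (hPR : P ≤ R) {ℓ : A}
    (hexact : P * R ⊓ LinearMap.ker ev.toLinearMap ≤ ℓ • R) :
    P * (P * R) ⊓ LinearMap.ker ev.toLinearMap ≤ ℓ • (P * R) := by
  intro ζ hζ
  by_contra hnot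
  obtain ⟨χ, hχζ, hχ⟩ := Submodule.exists_le_ker_of_notMem hnot
  refine hχζ (mul_inf_ker_le_ker hprim h1 hker hdim (fun x hx z hz hevz => ?_) hPR hζ)
  obtain ⟨z', hz', rfl⟩ := (Submodule.mem_smul_pointwise_iff_exists _ _ _).1 (hexact ⟨hz, hevz⟩)
  rw [smul_eq_mul, mul_left_comm, ← smul_eq_mul]
  exact hχ (Submodule.smul_mem_pointwise_smul _ _ _ (Submodule.mul_mem_mul hx hz'))

end Propagation

/-! ### Generic hyperplane sections -/

section StablePowers

open Module

variable {K A : Type*} [Field K] [CommRing A] [Algebra K A] {V : Submodule K A}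

theorem exists_pow_succ_eq_pow_of_finrank_le [FiniteDimensional K V] (h1 : (1 : A) ∈ V) {b : ℕ}
    (hb : ∀ i, finrank K ↥(V ^ i) ≤ b) : ∃ n, V ^ (n + 1) = V ^ n := by
  by_contra! hne
  have hgrow : StrictMono fun i => finrank K ↥(V ^ i) := strictMono_nat_of_lt_succ fun n =>
    have : FiniteDimensional K ↥(V ^ (n + 1)) := Module.Finite.iff_fg.2 (submodule_pow_fg V _)
    Submodule.finrank_lt_finrank_of_lt
      (lt_of_le_of_ne (submodule_pow_mono h1 n.le_succ) (hne n).symm)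
  exact (hb (b + 1)).not_gt (hgrow.le_apply)

theorem exists_subalgebra_toSubmodule_eq_pow (h1 : (1 : A) ∈ V) {n : ℕ}
    (hn : V ^ (n + 1) = V ^ n) : ∃ S : Subalgebra K A, Subalgebra.toSubmodule S = V ^ n := by
  have hadd : ∀ m, V ^ (n + m) = V ^ n := by
    intro m
    induction m with
    | zero => rfl
    | succ m ih => rw [← add_assoc, pow_succ, ih, ← pow_succ, hn]
  exact ⟨(V ^ n).toSubalgebra (one_mem_submodule_pow h1 n) fun x y hx hy => by
    simpa only [← pow_add, hadd] using Submodule.mul_mem_mul hx hy, rfl⟩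

end StablePowers

section GenericSection

open Module TensorProduct
open scoped Pointwise

variable {k K F Ω : Type*} [Field k] [Field K] [Field F] [Field Ω]
  [Algebra k K] [Algebra k F] [Algebra K Ω]

/-- Abstract data of a generic hyperplane section of the curve embedded by `W`. The linear form `ℓ`
has coefficients in an extension `K` of `k`, and `ev` restricts functions to its zero locus, which
is a single point with residue field `Ω` over `K`. The field `primitive` takes the place of the
general position of the points of a hyperplane section. -/
structure GenericSection (W : Submodule k F) (ev : K ⊗[k] F →ₐ[K] Ω) (ℓ : K ⊗[k] F) : Prop where
  mem : ℓ ∈ W.baseChange K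
  regular : IsLeftRegular ℓ
  ev_eq_zero : ev ℓ = 0
  inf_ker_le : ∀ i : ℕ, (satPow W (i + 1)).baseChange K ⊓ LinearMap.ker ev.toLinearMap ≤
    ℓ • (satPow W i).baseChange K
  generate : ∀ S : Subalgebra K Ω, FiniteDimensional K S →
    (∀ f ∈ W, ev (1 ⊗ₜ f) ∈ S) → S = ⊤
  primitive : FiniteDimensional K Ω → HasNoProperIntermediateField K Ω

/-- The restriction to a hyperplane section of a space `E` of functions, with scalars extended to
the field of coefficients `K`. -/
def sectionImage (ev : K ⊗[k] F →ₐ[K] Ω) (E : Submodule k F) : Submodule K Ω :=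
  (E.baseChange K).map ev.toLinearMap

theorem sectionImage_pow (ev : K ⊗[k] F →ₐ[K] Ω) (E : Submodule k F) (n : ℕ) :
    sectionImage ev (E ^ n) = sectionImage ev E ^ n := by
  rw [sectionImage, submodule_baseChange_pow, Submodule.map_pow, sectionImage]

theorem sectionImage_mono (ev : K ⊗[k] F →ₐ[K] Ω) : Monotone (sectionImage ev) :=
  fun _ _ h => Submodule.map_mono (Submodule.baseChange_mono K h)

theorem map_one_tmul_mem_sectionImage (ev : K ⊗[k] F →ₐ[K] Ω) {E : Submodule k F} {f : F}
    (hf : f ∈ E) : ev (1 ⊗ₜ f) ∈ sectionImage ev E :=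
  ⟨1 ⊗ₜ f, Submodule.tmul_mem_baseChange_of_mem _ hf, rfl⟩

theorem one_mem_sectionImage (ev : K ⊗[k] F →ₐ[K] Ω) {E : Submodule k F} (h1 : (1 : F) ∈ E) :
    (1 : Ω) ∈ sectionImage ev E := by
  simpa [← Algebra.TensorProduct.one_def] using map_one_tmul_mem_sectionImage ev h1

theorem finiteDimensional_sectionImage (ev : K ⊗[k] F →ₐ[K] Ω) {E : Submodule k F} (hE : E.FG) :
    FiniteDimensional K (sectionImage ev E) :=
  Module.Finite.iff_fg.2 (((submodule_baseChange_fg_iff K E).2 hE).map _)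

namespace GenericSection

variable {W : Submodule k F} {ev : K ⊗[k] F →ₐ[K] Ω} {ℓ : K ⊗[k] F}

theorem finrank_smul_baseChange (h : GenericSection W ev ℓ) (E : Submodule k F) :
    finrank K ↥(ℓ • E.baseChange K) = finrank k E := by
  rw [← finrank_submodule_baseChange K E]
  exact (Submodule.equivMapOfInjective (LinearMap.mulLeft K ℓ) h.regular _).finrank_eq.symm

theorem smul_baseChange_le (h : GenericSection W ev ℓ) {E E' : Submodule k F} (hE : W * E ≤ E') :
    ℓ • E.baseChange K ≤ E'.baseChange K ⊓ LinearMap.ker ev.toLinearMap := by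
  intro x hx
  obtain ⟨ζ, hζ, rfl⟩ := (Submodule.mem_smul_pointwise_iff_exists _ _ _).1 hx
  refine ⟨Submodule.baseChange_mono K hE ?_, ?_⟩
  · rw [submodule_baseChange_mul]
    exact Submodule.mul_mem_mul h.mem hζ
  · simp [h.ev_eq_zero]

theorem finrank_sectionImage_add_finrank_inf_ker {E : Submodule k F} (hE : E.FG) :
    finrank K (sectionImage ev E) +
      finrank K ↥(E.baseChange K ⊓ LinearMap.ker ev.toLinearMap) = finrank k E := by
  have : FiniteDimensional K (E.baseChange K) :=
    Module.Finite.iff_fg.2 ((submodule_baseChange_fg_iff K E).2 hE)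
  rw [← finrank_submodule_baseChange K E]
  exact finrank_map_add_finrank_inf_ker ev.toLinearMap (E.baseChange K)

theorem finiteDimensional_inf_ker {E : Submodule k F} (hE : E.FG) :
    FiniteDimensional K ↥(E.baseChange K ⊓ LinearMap.ker ev.toLinearMap) :=
  have : FiniteDimensional K (E.baseChange K) :=
    Module.Finite.iff_fg.2 ((submodule_baseChange_fg_iff K E).2 hE)
  Submodule.finiteDimensional_of_le inf_le_left

theorem finrank_sectionImage_add_le (h : GenericSection W ev ℓ) {E E' : Submodule k F}
    (hE' : E'.FG) (hE : W * E ≤ E') :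
    finrank K (sectionImage ev E') + finrank k E ≤ finrank k E' := by
  have := finiteDimensional_inf_ker (ev := ev) hE'
  rw [← finrank_sectionImage_add_finrank_inf_ker (ev := ev) hE', ← h.finrank_smul_baseChange E]
  exact Nat.add_le_add_left (Submodule.finrank_mono (h.smul_baseChange_le hE)) _

theorem finrank_sectionImage_add_eq_iff (h : GenericSection W ev ℓ) {E E' : Submodule k F}
    (hE' : E'.FG) (hE : W * E ≤ E') :
    finrank K (sectionImage ev E') + finrank k E = finrank k E' ↔
      E'.baseChange K ⊓ LinearMap.ker ev.toLinearMap ≤ ℓ • E.baseChange K := by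
  have := finiteDimensional_inf_ker (ev := ev) hE'
  rw [← finrank_sectionImage_add_finrank_inf_ker (ev := ev) hE', ← h.finrank_smul_baseChange E,
    Nat.add_left_cancel_iff]
  exact ⟨fun heq => (Submodule.eq_of_le_of_finrank_eq (h.smul_baseChange_le hE) heq).ge,
    fun hle => by rw [le_antisymm hle (h.smul_baseChange_le hE)]⟩

variable [FiniteDimensional k W] (h1 : (1 : F) ∈ W)

section Stabilization

variable {s p : ℤ} {N : ℕ} (hw : ∀ t : ℕ, N ≤ t → (finrank k ↥(W ^ t) : ℤ) = s * t + 1 - p)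
include h1 hw

theorem finrank_sectionImage_pow_le (h : GenericSection W ev ℓ) (i : ℕ) :
    (finrank K (sectionImage ev (W ^ i)) : ℤ) ≤ s := by
  have hadd := h.finrank_sectionImage_add_le (submodule_pow_fg W (i + N + 1))
    (pow_succ' W (i + N)).ge
  have := finiteDimensional_sectionImage ev (submodule_pow_fg W (i + N + 1))
  have hmono := Submodule.finrank_mono
    (sectionImage_mono ev (submodule_pow_mono h1 (show i ≤ i + N + 1 by omega)))
  have hlow := hw (i + N) (by omega)
  have hhigh := hw (i + N + 1) (by omega)
  push_cast at hlow hhigh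
  zify at hadd hmono
  linarith

theorem exists_sectionImage_pow_eq_top (h : GenericSection W ev ℓ) :
    ∃ n : ℕ, sectionImage ev (W ^ n) = ⊤ := by
  have : FiniteDimensional K (sectionImage ev W) :=
    finiteDimensional_sectionImage ev (Module.Finite.iff_fg.1 ‹_›)
  obtain ⟨n, hn⟩ := exists_pow_succ_eq_pow_of_finrank_le (one_mem_sectionImage ev h1)
    (b := s.toNat) fun i => by
      have := h.finrank_sectionImage_pow_le h1 hw i
      rw [sectionImage_pow] at this
      omega
  obtain ⟨S, hS⟩ := exists_subalgebra_toSubmodule_eq_pow (one_mem_sectionImage ev h1) hn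
  have hSfin : FiniteDimensional K S := by
    change FiniteDimensional K (Subalgebra.toSubmodule S)
    rw [hS, ← sectionImage_pow]
    exact finiteDimensional_sectionImage ev (submodule_pow_fg W n)
  have hStop := h.generate S hSfin fun f hf => by
    rw [← Subalgebra.mem_toSubmodule, hS, ← hn]
    simpa using submodule_pow_mono (one_mem_sectionImage ev h1) (Nat.le_add_left 1 n)
      (by simpa using map_one_tmul_mem_sectionImage ev hf)
  exact ⟨n, by rw [sectionImage_pow, ← hS, hStop, Algebra.top_toSubmodule]⟩

theorem finiteDimensional (h : GenericSection W ev ℓ) : FiniteDimensional K Ω := by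
  obtain ⟨n, hn⟩ := h.exists_sectionImage_pow_eq_top h1 hw
  exact ⟨hn ▸ Module.Finite.iff_fg.1 (finiteDimensional_sectionImage ev (submodule_pow_fg W n))⟩

end Stabilization

section Saturation

variable [IsAlgClosed k] [FiniteDimensional K Ω]
include h1

theorem satPow_fg (h : GenericSection W ev ℓ) (i : ℕ) : (satPow W i).FG := by
  induction i with
  | zero =>
    rw [satPow_zero h1, Submodule.one_eq_span]
    exact Submodule.fg_span_singleton _
  | succ i ih =>
    rw [← submodule_baseChange_fg_iff K]
    refine Submodule.fg_of_fg_map_of_fg_inf_ker ev.toLinearMap (IsNoetherian.noetherian _) ?_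
    have : FiniteDimensional K ↥(ℓ • (satPow W i).baseChange K) :=
      Module.Finite.iff_fg.2 (((submodule_baseChange_fg_iff K _).2 ih).map _)
    exact Module.Finite.iff_fg.1 (Submodule.finiteDimensional_of_le (h.inf_ker_le i))

theorem finrank_satPow_succ (h : GenericSection W ev ℓ) (i : ℕ) :
    finrank K (sectionImage ev (satPow W (i + 1))) + finrank k (satPow W i) =
      finrank k (satPow W (i + 1)) :=
  (h.finrank_sectionImage_add_eq_iff (h.satPow_fg h1 _) (mul_satPow_le W i)).2 (h.inf_ker_le i)

theorem mul_satPow_eq (h : GenericSection W ev ℓ) {n i : ℕ} (hn : sectionImage ev (W ^ n) = ⊤)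
    (hi : n ≤ i) : W * satPow W i = satPow W (i + 1) := by
  refine submodule_eq_of_baseChange_le K (h.satPow_fg h1 _) (mul_satPow_le W i) fun ζ hζ => ?_
  obtain ⟨η, hη, hηζ⟩ : ev ζ ∈ sectionImage ev (W ^ n) := hn ▸ Submodule.mem_top
  have hle : W ^ n ≤ W * satPow W i := calc
    W ^ n ≤ W ^ (i + 1) := submodule_pow_mono h1 (by omega)
    _ = W * W ^ i := pow_succ' W i
    _ ≤ W * satPow W i := mul_le_mul' le_rfl (pow_le_satPow W i)
  have hη' := Submodule.baseChange_mono K hle hη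
  have hsub : ζ - η ∈ ℓ • (satPow W i).baseChange K :=
    h.inf_ker_le i ⟨Submodule.sub_mem _ hζ (Submodule.baseChange_mono K (mul_satPow_le W i) hη'),
      LinearMap.mem_ker.2 (by rw [map_sub, hηζ]; exact sub_self _)⟩
  exact (Submodule.sub_mem_iff_left _ hη').1 (h.smul_baseChange_le le_rfl hsub).1

theorem exists_satPow_eq_pow (h : GenericSection W ev ℓ) {n : ℕ}
    (hn : sectionImage ev (W ^ n) = ⊤) : ∃ N, ∀ i, N ≤ i → satPow W i = W ^ i := by
  have hadd : ∀ m, satPow W (n + m) = W ^ m * satPow W n := by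
    intro m
    induction m with
    | zero => simp only [add_zero, pow_zero, one_mul]
    | succ m ih =>
      rw [← add_assoc, ← h.mul_satPow_eq h1 hn (by omega), ih, pow_succ', mul_assoc]
  obtain ⟨j, hj⟩ := exists_mul_pow_le_of_fg (h.satPow_fg h1 n) le_rfl
  refine ⟨j + n, fun i hi => le_antisymm ?_ (pow_le_satPow W i)⟩
  obtain ⟨m, rfl⟩ := Nat.exists_eq_add_of_le hi
  calc satPow W (j + n + m) = W ^ m * (satPow W n * W ^ j) := by
        rw [show j + n + m = n + (m + j) by ring, hadd, pow_add, mul_assoc,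
          mul_comm (W ^ j)]
    _ ≤ W ^ m * W ^ (j + n) := mul_le_mul' le_rfl hj
    _ = W ^ (j + n + m) := by rw [← pow_add, add_comm]

end Saturation

end GenericSection

end GenericSection

/-! ### Growth estimates from a generic section -/

section Growth

open Module TensorProduct
open scoped Pointwise

theorem eq_mul_add_of_eventually_eq {a : ℕ → ℤ} {s c : ℤ} {n N : ℕ}
    (hstep : ∀ i, n ≤ i → a (i + 1) = a i + s) (ha : ∀ t : ℕ, N ≤ t → a t = s * t + c) :
    ∀ i : ℕ, n ≤ i → a i = s * i + c := by
  suffices h : ∀ m i : ℕ, n ≤ i → N ≤ i + m → a i = s * i + c from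
    fun i hi => h N i hi (Nat.le_add_left _ _)
  intro m
  induction m with
  | zero => exact fun i _ hN => ha i hN
  | succ m ih =>
    intro i hi hN
    have hnext := ih (i + 1) (by omega) (by omega)
    rw [hstep i hi] at hnext
    push_cast at hnext
    linarith

variable {k K F Ω : Type*} [Field k] [Field K] [Field F] [Field Ω]
  [Algebra k K] [Algebra k F] [Algebra K Ω] {W : Submodule k F}
  {ev : K ⊗[k] F →ₐ[K] Ω} {ℓ : K ⊗[k] F}

namespace GenericSection

variable [IsAlgClosed k] [FiniteDimensional k W] (h : GenericSection W ev ℓ) (h1 : (1 : F) ∈ W)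
include h h1

theorem finrank_inf_ker_le_one :
    finrank K ↥(W.baseChange K ⊓ LinearMap.ker ev.toLinearMap) ≤ 1 := by
  have hle : W.baseChange K ⊓ LinearMap.ker ev.toLinearMap ≤
      ℓ • (W ^ 0).baseChange K := by
    rw [pow_zero, ← satPow_zero h1]
    refine le_trans (inf_le_inf_right _ (Submodule.baseChange_mono K ?_)) (h.inf_ker_le 0)
    simpa using pow_le_satPow W 1
  have : FiniteDimensional K ↥(ℓ • (W ^ 0).baseChange K) := Module.Finite.iff_fg.2
    (((submodule_baseChange_fg_iff K _).2 (submodule_pow_fg W 0)).map _)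
  have hmono := Submodule.finrank_mono hle
  rwa [h.finrank_smul_baseChange, pow_zero, Submodule.one_eq_span,
    finrank_span_singleton one_ne_zero] at hmono

theorem finrank_le_finrank_sectionImage_add_one :
    finrank k W ≤ finrank K (sectionImage ev W) + 1 := by
  have hadd := finrank_sectionImage_add_finrank_inf_ker (ev := ev)
    (Module.Finite.iff_fg.1 ‹FiniteDimensional k W›)
  have hker := h.finrank_inf_ker_le_one h1
  omega

variable [FiniteDimensional K Ω]

theorem sectionImage_pow_eq_top (hdim : finrank K Ω + 4 ≤ 2 * finrank k W) {i : ℕ} (hi : 2 ≤ i) :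
    sectionImage ev (W ^ i) = ⊤ := by
  have hW := h.finrank_le_finrank_sectionImage_add_one h1
  rw [eq_top_iff, ← mul_eq_top_of_finrank_lt (U := sectionImage ev W) (V := sectionImage ev W)
    (by omega), ← sq, ← sectionImage_pow]
  exact sectionImage_mono ev (submodule_pow_mono h1 hi)

theorem inf_ker_le_smul_pow_succ (hdim : finrank K Ω + 4 ≤ 2 * finrank k W) {i : ℕ} (hi : 1 ≤ i)
    (hexact : (W ^ (i + 1)).baseChange K ⊓ LinearMap.ker ev.toLinearMap ≤
      ℓ • (W ^ i).baseChange K) :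
    (W ^ (i + 2)).baseChange K ⊓ LinearMap.ker ev.toLinearMap ≤
      ℓ • (W ^ (i + 1)).baseChange K := by
  have hpow : ∀ j, (W ^ (j + 1)).baseChange K = W.baseChange K * (W ^ j).baseChange K :=
    fun j => by rw [pow_succ', submodule_baseChange_mul]
  have hfin : FiniteDimensional K (W.baseChange K) := Module.Finite.iff_fg.2
    ((submodule_baseChange_fg_iff K W).2 (Module.Finite.iff_fg.1 ‹FiniteDimensional k W›))
  have hle : W.baseChange K ≤ (W ^ i).baseChange K :=
    Submodule.baseChange_mono K (by simpa using submodule_pow_mono h1 hi)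
  rw [hpow] at hexact
  rw [hpow (i + 1), hpow i]
  exact mul_inf_ker_le_smul (h.primitive ‹_›) (Submodule.tmul_mem_baseChange_of_mem _ h1)
    (h.finrank_inf_ker_le_one h1) (by rwa [finrank_submodule_baseChange]) hle hexact

section Estimates

variable {s p : ℤ} {N : ℕ} (hw : ∀ t : ℕ, N ≤ t → (finrank k ↥(W ^ t) : ℤ) = s * t + 1 - p)
include hw

theorem finrank_eq_degree : (finrank K Ω : ℤ) = s := by
  obtain ⟨n, hn⟩ := h.exists_sectionImage_pow_eq_top h1 hw
  obtain ⟨N', hN'⟩ := h.exists_satPow_eq_pow h1 hn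
  have htop : sectionImage ev (satPow W (n + N + N' + 1)) = ⊤ := by
    rw [eq_top_iff, ← hn]
    exact sectionImage_mono ev
      ((submodule_pow_mono h1 (by omega)).trans (pow_le_satPow W _))
  have hadd := h.finrank_satPow_succ h1 (n + N + N')
  rw [htop, hN' _ (by omega), hN' _ (by omega), finrank_top] at hadd
  have hlow := hw (n + N + N') (by omega)
  have hhigh := hw (n + N + N' + 1) (by omega)
  push_cast at hlow hhigh
  zify at hadd
  linarith

variable (hs : s ≤ 2 * finrank k W - 4)
include hs

theorem finrank_satPow_succ_eq {i : ℕ} (hi : 1 ≤ i) :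
    (finrank k (satPow W (i + 1)) : ℤ) = finrank k (satPow W i) + s := by
  have hdeg := h.finrank_eq_degree h1 hw
  have htop : sectionImage ev (satPow W (i + 1)) = ⊤ := by
    rw [eq_top_iff, ← h.sectionImage_pow_eq_top h1 (i := i + 1) (by omega) (by omega)]
    exact sectionImage_mono ev (pow_le_satPow W _)
  have hadd := h.finrank_satPow_succ h1 i
  rw [htop, finrank_top] at hadd
  zify at hadd
  linarith

theorem finrank_satPow_eq {i : ℕ} (hi : 1 ≤ i) :
    (finrank k (satPow W i) : ℤ) = s * i + (1 - p) := by
  obtain ⟨n, hn⟩ := h.exists_sectionImage_pow_eq_top h1 hw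
  obtain ⟨N', hN'⟩ := h.exists_satPow_eq_pow h1 hn
  refine eq_mul_add_of_eventually_eq (a := fun i => finrank k (satPow W i)) (N := N + N')
    (fun i hi => h.finrank_satPow_succ_eq h1 hw hs hi) (fun t ht => ?_) i hi
  rw [hN' t (by omega), hw t (by omega), add_sub_assoc]

theorem finrank_pow_succ_eq_iff {i : ℕ} (hi : 1 ≤ i) :
    (finrank k ↥(W ^ (i + 1)) : ℤ) = finrank k ↥(W ^ i) + s ↔
      (W ^ (i + 1)).baseChange K ⊓ LinearMap.ker ev.toLinearMap ≤ ℓ • (W ^ i).baseChange K := by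
  have hdeg := h.finrank_eq_degree h1 hw
  rw [← h.finrank_sectionImage_add_eq_iff (submodule_pow_fg W _) (pow_succ' W i).ge,
    h.sectionImage_pow_eq_top h1 (by omega) (by omega), finrank_top]
  omega

theorem finrank_pow_add_le {i : ℕ} (hi : 1 ≤ i) :
    (finrank k ↥(W ^ i) : ℤ) + s ≤ finrank k ↥(W ^ (i + 1)) := by
  have hdeg := h.finrank_eq_degree h1 hw
  have hadd := h.finrank_sectionImage_add_le (submodule_pow_fg W (i + 1)) (pow_succ' W i).ge
  rw [h.sectionImage_pow_eq_top h1 (by omega) (by omega), finrank_top] at hadd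
  omega

theorem finrank_pow_succ_succ_eq {i : ℕ} (hi : 1 ≤ i)
    (hstep : (finrank k ↥(W ^ (i + 1)) : ℤ) = finrank k ↥(W ^ i) + s) :
    (finrank k ↥(W ^ (i + 2)) : ℤ) = finrank k ↥(W ^ (i + 1)) + s := by
  have hdeg := h.finrank_eq_degree h1 hw
  rw [h.finrank_pow_succ_eq_iff h1 hw hs hi] at hstep
  rw [h.finrank_pow_succ_eq_iff h1 hw hs (by omega)]
  exact h.inf_ker_le_smul_pow_succ h1 (by omega) hi hstep

/-- The powers of `W` grow by at least `s`, the saturation by exactly `s`. If one step of the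
former is exactly `s`, so are all later ones, and both Hilbert functions agree from there on. -/
theorem finrank_satPow_sub_finrank_pow_le {i : ℕ} (hi : 1 ≤ i) :
    (finrank k (satPow W (i + 1)) : ℤ) - finrank k ↥(W ^ (i + 1)) ≤
      max 0 ((finrank k (satPow W i) : ℤ) - finrank k ↥(W ^ i) - 1) := by
  have hsat := h.finrank_satPow_succ_eq h1 hw hs hi
  rcases (h.finrank_pow_add_le h1 hw hs hi).eq_or_lt with heq | hlt
  · have hstep : ∀ m, i ≤ m →
        (finrank k ↥(W ^ (m + 1)) : ℤ) = finrank k ↥(W ^ m) + s := fun m hm => by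
      induction m, hm using Nat.le_induction with
      | base => exact heq.symm
      | succ m hm ih => exact h.finrank_pow_succ_succ_eq h1 hw hs (hi.trans hm) ih
    have hpow := eq_mul_add_of_eventually_eq (a := fun i => finrank k ↥(W ^ i)) (c := 1 - p)
      hstep (fun t ht => by rw [hw t ht, add_sub_assoc]) i le_rfl
    have hsat' := h.finrank_satPow_eq h1 hw hs hi
    exact le_max_of_le_left (by linarith)
  · exact le_max_of_le_right (by linarith)

end Estimates

end GenericSection

end Growth

/-! ### Specialization of bivariate polynomials -/

section Specialization

open Polynomial

theorem exists_algHom_ne_zero (k : Type*) [Field k] [IsAlgClosed k] {A : Type*} [CommRing A]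
    [IsDomain A] [Algebra k A] [Algebra.FiniteType k A] {c : A} (hc : c ≠ 0) :
    ∃ φ : A →ₐ[k] k, φ c ≠ 0 := by
  let L := Localization.Away c
  have : IsDomain L := IsLocalization.isDomain_localization
    (powers_le_nonZeroDivisors_of_noZeroDivisors hc)
  have : Algebra.FiniteType k L := Algebra.FiniteType.trans (S := A) inferInstance
    (IsLocalization.finiteType_of_monoid_fg (Submonoid.powers c) L)
  obtain ⟨m, hm⟩ := Ideal.exists_maximal L
  let _ : Field (L ⧸ m) := Ideal.Quotient.field m
  have : Algebra.FiniteType k (L ⧸ m) := Algebra.FiniteType.of_surjective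
    (Ideal.Quotient.mkₐ k m) (Ideal.Quotient.mkₐ_surjective k m)
  have : Module.Finite k (L ⧸ m) := finite_of_finite_type_of_isJacobsonRing k (L ⧸ m)
  let e : k ≃ₐ[k] L ⧸ m := AlgEquiv.ofBijective (Algebra.ofId k (L ⧸ m))
    IsAlgClosed.algebraMap_bijective_of_isIntegral
  let ψ : A →ₐ[k] L ⧸ m := (Ideal.Quotient.mkₐ k m).comp (IsScalarTower.toAlgHom k A L)
  have hψ : IsUnit (ψ c) :=
    (IsLocalization.Away.algebraMap_isUnit (S := L) c).map (Ideal.Quotient.mkₐ k m)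
  exact ⟨(e.symm : L ⧸ m →ₐ[k] k).comp ψ, (hψ.map e.symm).ne_zero⟩

theorem bivariate_ringHom_ext {R A : Type*} [CommRing R] [Semiring A] {f g : R[X][X] →+* A}
    (hC : ∀ c, f (C (C c)) = g (C (C c))) (hCX : f (C X) = g (C X)) (hX : f X = g X) : f = g :=
  Polynomial.ringHom_ext' (Polynomial.ringHom_ext' (RingHom.ext hC) hCX) hX

theorem bivariate_algHom_ext {R A : Type*} [CommRing R] [CommRing A] [Algebra R A]
    {f g : R[X][X] →ₐ[R] A} (hCX : f (C X) = g (C X)) (hX : f X = g X) : f = g :=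
  Polynomial.algHom_ext' (Polynomial.algHom_ext hCX) hX

theorem map_bivariate_injective {A B : Type*} [CommRing A] [CommRing B] {f : A →+* B}
    (hf : Function.Injective f) :
    Function.Injective (Polynomial.map (mapRingHom f) : A[X][X] → B[X][X]) :=
  map_injective _ (map_injective _ hf)

theorem exists_map_bivariate_eq {A B : Type*} [CommRing A] [CommRing B] {f : A →+* B} {P : B[X][X]}
    (h : ∀ i j, (P.coeff j).coeff i ∈ f.range) : ∃ P₀ : A[X][X], P₀.map (mapRingHom f) = P := by
  rw [← mem_lifts, lifts_iff_coeff_lifts]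
  intro j
  have : P.coeff j ∈ lifts f := (lifts_iff_coeff_lifts _).2 fun i => h i j
  exact (mem_lifts _).1 this

theorem finite_range_coeff_coeff {R : Type*} [CommRing R] (P : R[X][X]) :
    (Set.range fun ij : ℕ × ℕ => (P.coeff ij.2).coeff ij.1).Finite := by
  refine ((P.finite_range_coeff.image fun p : R[X] => Set.range p.coeff).sUnion ?_).subset ?_
  · rintro _ ⟨p, -, rfl⟩
    exact p.finite_range_coeff
  · rintro _ ⟨⟨i, j⟩, rfl⟩
    exact ⟨_, ⟨_, ⟨j, rfl⟩, rfl⟩, i, rfl⟩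

theorem isUnit_bivariate_iff {R : Type*} [Field R] {P : R[X][X]} :
    IsUnit P ↔ P ≠ 0 ∧ ∀ i j, (i, j) ≠ (0, 0) → (P.coeff j).coeff i = 0 := by
  have hconst : ∀ c : R, ∀ i j, (i, j) ≠ (0, 0) → ((C (C c) : R[X][X]).coeff j).coeff i = 0 := by
    rintro c i (_ | j) hij
    · rw [coeff_C_zero, coeff_C_of_ne_zero fun hi => hij (by rw [hi])]
    · rw [coeff_C_of_ne_zero j.succ_ne_zero, coeff_zero]
  constructor
  · intro h
    obtain ⟨r, hr, rfl⟩ := isUnit_iff.1 h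
    obtain ⟨c, -, rfl⟩ := isUnit_iff.1 hr
    exact ⟨h.ne_zero, hconst c⟩
  · rintro ⟨h0, h⟩
    have hP : P = C (C ((P.coeff 0).coeff 0)) := by
      ext j i
      by_cases hij : (i, j) = (0, 0)
      · obtain ⟨rfl, rfl⟩ := Prod.mk.inj hij
        rw [coeff_C_zero, coeff_C_zero]
      · rw [h i j hij, hconst _ i j hij]
    have hc : (P.coeff 0).coeff 0 ≠ 0 := fun hc => h0 (by rw [hP, hc, C_0, C_0])
    rw [hP]
    exact (hc.isUnit.map C).map C

variable {k : Type*} [Field k]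

theorem exists_fg_subalgebra_map_eq {R : Type*} [CommRing R] [Algebra k R] (P Q : R[X][X]) :
    ∃ A : Subalgebra k R, A.FG ∧ ∃ P₀ Q₀ : A[X][X],
      P₀.map (mapRingHom (A.val : A →+* R)) = P ∧ Q₀.map (mapRingHom (A.val : A →+* R)) = Q := by
  let coeffs (P : R[X][X]) : Set R := Set.range fun ij : ℕ × ℕ => (P.coeff ij.2).coeff ij.1
  let A := Algebra.adjoin k (coeffs P ∪ coeffs Q)
  obtain ⟨P₀, hP⟩ := exists_map_bivariate_eq (f := (A.val : A →+* R)) (P := P) fun i j =>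
    ⟨⟨_, Algebra.subset_adjoin (Or.inl ⟨(i, j), rfl⟩)⟩, rfl⟩
  obtain ⟨Q₀, hQ⟩ := exists_map_bivariate_eq (f := (A.val : A →+* R)) (P := Q) fun i j =>
    ⟨⟨_, Algebra.subset_adjoin (Or.inr ⟨(i, j), rfl⟩)⟩, rfl⟩
  exact ⟨A, Subalgebra.fg_def.2
    ⟨_, (finite_range_coeff_coeff P).union (finite_range_coeff_coeff Q), rfl⟩, P₀, Q₀, hP, hQ⟩

theorem coeff_coeff_eq_zero_of_map_eq_mul [IsAlgClosed k] {A : Type*} [CommRing A] [IsDomain A]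
    [Algebra k A] [Algebra.FiniteType k A] {G : k[X][X]} (hG : Irreducible G) {P Q : A[X][X]}
    (h : G.map (mapRingHom (algebraMap k A)) = P * Q) {i j i' j' : ℕ} (hij : (i, j) ≠ (0, 0))
    (hij' : (i', j') ≠ (0, 0)) : (P.coeff j).coeff i = 0 ∨ (Q.coeff j').coeff i' = 0 := by
  by_contra! hcon
  obtain ⟨φ, hφ⟩ := exists_algHom_ne_zero k (mul_ne_zero hcon.1 hcon.2)
  have hfac := congrArg (Polynomial.map (mapRingHom (φ : A →+* k))) h
  rw [Polynomial.map_map, mapRingHom_comp, φ.comp_algebraMap, Algebra.algebraMap_self,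
    mapRingHom_id, Polynomial.map_id, Polynomial.map_mul] at hfac
  rw [map_mul] at hφ
  rcases hG.isUnit_or_isUnit hfac with hu | hu
  · refine left_ne_zero_of_mul hφ ?_
    simpa using (isUnit_bivariate_iff.1 hu).2 i j hij
  · refine right_ne_zero_of_mul hφ ?_
    simpa using (isUnit_bivariate_iff.1 hu).2 i' j' hij'

/-- A factorization over `F` is defined over a finitely generated `k`-algebra, and specializes to a
factorization over `k` in which a chosen nonconstant coefficient of each factor survives. -/
theorem irreducible_map_bivariate [IsAlgClosed k] {F : Type*} [Field F] [Algebra k F] {G : k[X][X]}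
    (hG : Irreducible G) : Irreducible (G.map (mapRingHom (algebraMap k F))) := by
  have hG0 : G.map (mapRingHom (algebraMap k F)) ≠ 0 := fun h => hG.ne_zero
    (map_bivariate_injective (algebraMap k F).injective (by rw [h, Polynomial.map_zero]))
  refine ⟨fun hu => hG.not_isUnit (isUnit_bivariate_iff.2 ⟨hG.ne_zero, fun i j hij => ?_⟩),
    fun P Q hPQ => ?_⟩
  · simpa using (isUnit_bivariate_iff.1 hu).2 i j hij
  obtain ⟨A, hA, P₀, Q₀, rfl, rfl⟩ := exists_fg_subalgebra_map_eq (k := k) P Q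
  have := A.fg_iff_finiteType.1 hA
  have hPQ₀ : G.map (mapRingHom (algebraMap k A)) = P₀ * Q₀ := by
    apply map_bivariate_injective (f := (A.val : A →+* F)) Subtype.val_injective
    rw [Polynomial.map_mul, ← hPQ, Polynomial.map_map, mapRingHom_comp, A.val.comp_algebraMap]
  rw [hPQ] at hG0
  by_contra! hcon
  simp only [isUnit_bivariate_iff, ne_eq, left_ne_zero_of_mul hG0, right_ne_zero_of_mul hG0,
    not_false_eq_true, true_and, not_forall] at hcon
  obtain ⟨⟨i, j, hij, hp⟩, i', j', hij', hq⟩ := hcon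
  rcases coeff_coeff_eq_zero_of_map_eq_mul hG hPQ₀ hij hij' with h | h
  · exact hp (by simp [h])
  · exact hq (by simp [h])

end Specialization

/-! ### Factors of a sheared polynomial -/

section Shear

open Polynomial

theorem mem_of_C_X_mem_of_X_mem {R : Type*} [CommRing R] {S : Subalgebra R R[X][X]}
    (hCX : C X ∈ S) (hX : X ∈ S) (a : R[X][X]) : a ∈ S := by
  have hid : S.val.comp (aevalAeval (⟨C X, hCX⟩ : S) ⟨X, hX⟩) = AlgHom.id R R[X][X] := by
    apply bivariate_algHom_ext <;> simp
  rw [← AlgHom.id_apply (R := R) a, ← hid]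
  exact (aevalAeval (⟨C X, hCX⟩ : S) ⟨X, hX⟩ a).2

variable {F : Type*} [Field F] (f₁ f₂ : F)

/-- The substitution `x ↦ f₁ + u (y - f₂)`, `y ↦ y` turning polynomials in `x, y` into polynomials
in `u, y`: it restricts a plane curve to the line of slope `u` through `(f₁, f₂)`. -/
noncomputable def shear : F[X][X] →ₐ[F] F[X][X] :=
  aevalAeval (R := F) (C (C f₁) + C X * (X - C (C f₂))) X

theorem shear_C_X : shear f₁ f₂ (C X) = C (C f₁) + C X * (X - C (C f₂)) := by
  simp [shear]

theorem shear_X : shear f₁ f₂ X = X := by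
  simp [shear]

theorem shear_C_C (c : F) : shear f₁ f₂ (C (C c)) = C (C c) :=
  (shear f₁ f₂).commutes c

theorem shear_X_sub_C_C : shear f₁ f₂ (X - C (C f₂)) = X - C (C f₂) := by
  rw [map_sub, shear_X, shear_C_C]

/-- After inverting `y - f₂` the substitution has the inverse `u ↦ (x - f₁) / (y - f₂)`. -/
theorem shear_injective : Function.Injective (shear f₁ f₂) := by
  let Q := FractionRing F[X][X]
  let i : F[X][X] →ₐ[F] Q := IsScalarTower.toAlgHom F F[X][X] Q
  have hi : Function.Injective i := IsFractionRing.injective F[X][X] Q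
  have hZ : i (X - C (C f₂)) ≠ 0 := (map_ne_zero_iff i hi).2 (X_sub_C_ne_zero _)
  let ρ : F[X][X] →ₐ[F] Q :=
    aevalAeval (R := F) ((i (C X) - i (C (C f₁))) / i (X - C (C f₂))) (i X)
  have hρX : ρ X = i X := by simp [ρ]
  have hρu : ρ (C X) = (i (C X) - i (C (C f₁))) / i (X - C (C f₂)) := by simp [ρ]
  have hρC : ∀ c : F, ρ (C (C c)) = i (C (C c)) := fun c =>
    (ρ.commutes c).trans (i.commutes c).symm
  have hρ : ρ.comp (shear f₁ f₂) = i := by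
    apply bivariate_algHom_ext
    · rw [AlgHom.comp_apply, shear_C_X, map_add, map_mul, map_sub, hρu, hρX, hρC, hρC,
        ← map_sub i X, div_mul_cancel₀ _ hZ]
      ring
    · rw [AlgHom.comp_apply, shear_X, hρX]
  exact Function.Injective.of_comp (f := ρ) (by rwa [← AlgHom.coe_comp, hρ])

theorem exists_shear_eq_pow_mul (a : F[X][X]) :
    ∃ (p : ℕ) (A : F[X][X]), shear f₁ f₂ A = (X - C (C f₂)) ^ p * a := by
  let S : Subalgebra F F[X][X] :=
    { carrier := {a | ∃ (p : ℕ) (A : F[X][X]), shear f₁ f₂ A = (X - C (C f₂)) ^ p * a}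
      mul_mem' := by
        rintro a b ⟨p, A, hA⟩ ⟨q, B, hB⟩
        exact ⟨p + q, A * B, by rw [map_mul, hA, hB]; ring⟩
      add_mem' := by
        rintro a b ⟨p, A, hA⟩ ⟨q, B, hB⟩
        refine ⟨p + q, (X - C (C f₂)) ^ q * A + (X - C (C f₂)) ^ p * B, ?_⟩
        rw [map_add, map_mul, map_mul, map_pow, map_pow, shear_X_sub_C_C, hA, hB]
        ring
      algebraMap_mem' := fun c => ⟨0, algebraMap F F[X][X] c, by rw [AlgHom.commutes]; ring⟩ }
  refine mem_of_C_X_mem_of_X_mem (S := S) ⟨1, C X - C (C f₁), ?_⟩ ⟨0, X, ?_⟩ a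
  · rw [map_sub, shear_C_X, shear_C_C]
    ring
  · rw [shear_X]
    ring

variable {f₁ f₂} {G : F[X][X]} {d : F[X]}

theorem dvd_mul_pow_of_shear_eq (hG : G ≠ 0) {a b A : F[X][X]} {p : ℕ}
    (h : C d * shear f₁ f₂ G = a * b) (hA : shear f₁ f₂ A = (X - C (C f₂)) ^ p * a) (hGA : G ∣ A) :
    b ∣ C d * (X - C (C f₂)) ^ p := by
  obtain ⟨B, rfl⟩ := hGA
  refine ⟨shear f₁ f₂ B, mul_left_cancel₀ ((map_ne_zero_iff _ (shear_injective f₁ f₂)).2 hG) ?_⟩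
  rw [map_mul] at hA
  linear_combination (X - C (C f₂)) ^ p * h - b * hA

theorem exists_dvd_pow_of_shear_eq_mul (hG : Prime G) {a b : F[X][X]}
    (h : C d * shear f₁ f₂ G = a * b) :
    ∃ n : ℕ, a ∣ C d * (X - C (C f₂)) ^ n ∨ b ∣ C d * (X - C (C f₂)) ^ n := by
  obtain ⟨p, A, hA⟩ := exists_shear_eq_pow_mul f₁ f₂ a
  obtain ⟨q, B, hB⟩ := exists_shear_eq_pow_mul f₁ f₂ b
  obtain ⟨m, D, hD⟩ := exists_shear_eq_pow_mul f₁ f₂ (C d)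
  have hdvd : G ∣ (X - C (C f₂)) ^ m * (A * B) := by
    refine ⟨D * (X - C (C f₂)) ^ (p + q), shear_injective f₁ f₂ ?_⟩
    simp only [map_mul, map_pow, shear_X_sub_C_C, hA, hB, hD]
    linear_combination (-(X - C (C f₂)) ^ (m + p + q)) * h
  rcases hG.dvd_or_dvd hdvd with hGm | hGAB
  · have hGX : shear f₁ f₂ G ∣ X - C (C f₂) := by
      simpa only [shear_X_sub_C_C] using map_dvd (shear f₁ f₂) (hG.dvd_of_dvd_pow hGm)
    refine ⟨1, Or.inl ((Dvd.intro b h.symm).trans ?_)⟩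
    rw [pow_one]
    exact mul_dvd_mul_left _ hGX
  · rcases hG.dvd_or_dvd hGAB with hGA | hGB
    · exact ⟨p, Or.inr (dvd_mul_pow_of_shear_eq hG.ne_zero h hA hGA)⟩
    · exact ⟨q, Or.inl (dvd_mul_pow_of_shear_eq hG.ne_zero (h.trans (mul_comm a b)) hB hGB)⟩

variable {Ω : Type*} [Field Ω] [Algebra F[X] Ω] [IsFractionRing F[X] Ω]

theorem exists_map_eq_C_mul (a : Polynomial Ω) : ∃ (d : F[X]) (a' : F[X][X]), d ≠ 0 ∧
    a'.map (algebraMap F[X] Ω) = C (algebraMap F[X] Ω d) * a := by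
  obtain ⟨d, hd, h⟩ := IsLocalization.integerNormalization_spec (nonZeroDivisors F[X]) a
  refine ⟨d, _, nonZeroDivisors.ne_zero hd, h.trans ?_⟩
  rw [← smul_eq_C_mul]
  exact (algebraMap_smul Ω d a).symm

theorem isUnit_C_algebraMap (hd : d ≠ 0) : IsUnit (C (algebraMap F[X] Ω d)) :=
  isUnit_C.2 (isUnit_iff_ne_zero.2 ((map_ne_zero_iff _ (IsFractionRing.injective F[X] Ω)).2 hd))

variable [Algebra F Ω] [IsScalarTower F F[X] Ω]

theorem dvd_pow_of_map_eq_C_mul {e : F[X]} (hd : d ≠ 0) (he : e ≠ 0) {a' : F[X][X]}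
    {a : Polynomial Ω} (ha : a'.map (algebraMap F[X] Ω) = C (algebraMap F[X] Ω d) * a) {n : ℕ}
    (h : a' ∣ C e * (X - C (C f₂)) ^ n) : a ∣ (X - C (algebraMap F Ω f₂)) ^ n := by
  have h' := Polynomial.map_dvd (algebraMap F[X] Ω) h
  rw [ha, Polynomial.map_mul, map_C, Polynomial.map_pow, Polynomial.map_sub, map_X, map_C,
    (isUnit_C_algebraMap hd).mul_left_dvd, (isUnit_C_algebraMap he).dvd_mul_left] at h'
  rwa [IsScalarTower.algebraMap_apply F F[X] Ω]

theorem exists_dvd_pow_of_map_shear_eq_mul (hG : Prime G) {a b : Polynomial Ω}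
    (h : (shear f₁ f₂ G).map (algebraMap F[X] Ω) = a * b) :
    ∃ n : ℕ, a ∣ (X - C (algebraMap F Ω f₂)) ^ n ∨ b ∣ (X - C (algebraMap F Ω f₂)) ^ n := by
  obtain ⟨d, a', hd, ha⟩ := exists_map_eq_C_mul (F := F) a
  obtain ⟨e, b', he, hb⟩ := exists_map_eq_C_mul (F := F) b
  have hab : C (d * e) * shear f₁ f₂ G = a' * b' := by
    apply map_injective _ (IsFractionRing.injective F[X] Ω)
    rw [Polynomial.map_mul, Polynomial.map_mul, ha, hb, h, map_C, map_mul, C_mul]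
    ring
  obtain ⟨n, hn⟩ := exists_dvd_pow_of_shear_eq_mul hG hab
  exact ⟨n, hn.imp (dvd_pow_of_map_eq_C_mul hd (mul_ne_zero hd he) ha)
    (dvd_pow_of_map_eq_C_mul he (mul_ne_zero hd he) hb)⟩

end Shear

/-! ### Primitivity of the generic member of a pencil -/

section Primitive

open Polynomial Module

section PowersOfLinearFactor

variable {K Ω : Type*} [Field K] [Field Ω] [Algebra K Ω] {α : Ω}

theorem mem_range_of_map_minpoly_dvd_pow (hα : IsSeparable K α) {n : ℕ}
    (h : (minpoly K α).map (algebraMap K Ω) ∣ (X - C α) ^ n) : α ∈ (algebraMap K Ω).range := by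
  have hdvd : (minpoly K α).map (algebraMap K Ω) ∣ X - C α := by
    rcases Nat.eq_zero_or_pos n with rfl | hn
    · exact (isUnit_of_dvd_one (by rwa [pow_zero] at h)).dvd
    · exact (Separable.squarefree (Separable.map hα)).dvd_pow_iff_dvd hn.ne' |>.1 h
  have hdeg := natDegree_le_of_dvd hdvd (X_sub_C_ne_zero α)
  rw [natDegree_X_sub_C, natDegree_map] at hdeg
  refine minpoly.mem_range_of_degree_eq_one K α ((degree_eq_iff_natDegree_eq_of_pos one_pos).2 ?_)
  exact le_antisymm hdeg (minpoly.natDegree_pos hα.isIntegral)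

theorem isUnit_of_dvd_X_sub_C_pow {q m : Polynomial Ω} (hsq : Squarefree (q * m))
    (hq : X - C α ∣ q) {n : ℕ} (hm : m ∣ (X - C α) ^ n) : IsUnit m := by
  have hcop : IsCoprime q m := isRelPrime_iff_isCoprime.1 (squarefree_mul_iff.1 hsq).1
  exact (hcop.of_isCoprime_of_dvd_left hq).pow_left.isUnit_of_dvd' hm dvd_rfl

theorem natDegree_minpoly_eq_of_map_eq_mul (hα : IsSeparable K α) (H : IntermediateField K Ω)
    {m : Polynomial Ω}
    (h : (minpoly K α).map (algebraMap K Ω) = (minpoly H α).map (algebraMap H Ω) * m) {n : ℕ}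
    (hm : m ∣ (X - C α) ^ n) : (minpoly H α).natDegree = (minpoly K α).natDegree := by
  have hsq : Squarefree ((minpoly H α).map (algebraMap H Ω) * m) :=
    h ▸ (Separable.map hα).squarefree
  have hroot : X - C α ∣ (minpoly H α).map (algebraMap H Ω) := by
    rw [dvd_iff_isRoot, IsRoot, eval_map_algebraMap, minpoly.aeval]
  have hunit : IsUnit m := isUnit_of_dvd_X_sub_C_pow hsq hroot hm
  rw [← natDegree_map (algebraMap K Ω), h, natDegree_mul (left_ne_zero_of_mul hsq.ne_zero)
    hunit.ne_zero, natDegree_eq_zero_of_isUnit hunit, add_zero, natDegree_map]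

theorem eq_bot_of_natDegree_minpoly_eq [FiniteDimensional K Ω] (H : IntermediateField K Ω)
    (hα : IntermediateField.adjoin K {α} = ⊤)
    (hdeg : (minpoly H α).natDegree = (minpoly K α).natDegree) : H = ⊥ := by
  have hαH : IntermediateField.adjoin H {α} = ⊤ := by
    rw [← IntermediateField.restrictScalars_eq_top_iff (K := K), eq_top_iff, ← hα,
      IntermediateField.adjoin_simple_le_iff]
    exact IntermediateField.mem_adjoin_simple_self H α
  have hK := (Field.primitive_element_iff_minpoly_natDegree_eq K α).1 hα
  have hH := (Field.primitive_element_iff_minpoly_natDegree_eq H α).1 hαH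
  have hmul := finrank_mul_finrank K H Ω
  rw [← hH, hdeg, hK] at hmul
  exact IntermediateField.finrank_eq_one_iff.1
    (Nat.eq_of_mul_eq_mul_right finrank_pos (hmul.trans (one_mul _).symm))

/-- The minimal polynomial of `α` over an intermediate field divides its minimal polynomial over
`K`, which has no multiple roots. So it is the one or the other of two complementary factors that
has no root but `α`. -/
theorem hasNoProperIntermediateField_of_forall_dvd_pow [FiniteDimensional K Ω]
    (hα : IsSeparable K α) (htop : IntermediateField.adjoin K {α} = ⊤) {φ : K[X]}
    (hroot : aeval α φ = 0) (hφ : ∀ a b : Polynomial Ω, φ.map (algebraMap K Ω) = a * b →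
      ∃ n : ℕ, a ∣ (X - C α) ^ n ∨ b ∣ (X - C α) ^ n) :
    HasNoProperIntermediateField K Ω := by
  intro H
  obtain ⟨m, hm⟩ : (minpoly H α).map (algebraMap H Ω) ∣ (minpoly K α).map (algebraMap K Ω) := by
    have h := Polynomial.map_dvd (algebraMap H Ω) (minpoly.dvd_map_of_isScalarTower K H α)
    rwa [Polynomial.map_map, ← IsScalarTower.algebraMap_eq] at h
  obtain ⟨c, hc⟩ := Polynomial.map_dvd (algebraMap K Ω) (minpoly.dvd K α hroot)
  rw [hm, mul_assoc] at hc
  obtain ⟨n, hn | hn⟩ := hφ _ _ hc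
  · right
    obtain ⟨x, hx⟩ := mem_range_of_map_minpoly_dvd_pow (hα.tower_top H) hn
    rw [eq_top_iff, ← htop, IntermediateField.adjoin_simple_le_iff, ← hx]
    exact x.2
  · left
    exact eq_bot_of_natDegree_minpoly_eq H htop
      (natDegree_minpoly_eq_of_map_eq_mul hα H hm ((dvd_mul_right m c).trans hn))

end PowersOfLinearFactor

variable {k F K Ω : Type*} [Field k] [Field F] [Field K] [Field Ω] [Algebra k K] [Algebra K Ω]
  [Algebra F[X] Ω] [Algebra F Ω]

variable (k Ω) in
/-- The field of definition of the generic member `f₁ - u f₂ = g` of the pencil spanned by `f₁` and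
`f₂`: a subfield `K = k(u, g)` of the field `Ω = F(u)`, where `u` is an indeterminate. -/
structure IsPencilField (f₁ f₂ : F) (u g : K) : Prop where
  algebraMap_param : algebraMap K Ω u = algebraMap F[X] Ω X
  algebraMap_value : algebraMap K Ω g = algebraMap F Ω f₁ - algebraMap F[X] Ω X * algebraMap F Ω f₂
  adjoin_eq_top : IntermediateField.adjoin k {u, g} = ⊤

/-- The equation over `k(u, g)` satisfied by `f₂` when `G` is an equation for `(f₁, f₂)`. -/
noncomputable def pencilEquation (u g : K) (G : k[X][X]) : K[X] :=
  aevalAeval (C g + C u * X) X G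

namespace IsPencilField

variable {f₁ f₂ : F} {u g : K}

theorem algebraMap_value_add (h : IsPencilField k Ω f₁ f₂ u g) :
    algebraMap K Ω g + algebraMap K Ω u * algebraMap F Ω f₂ = algebraMap F Ω f₁ := by
  rw [h.algebraMap_value, h.algebraMap_param, sub_add_cancel]

variable [Algebra k F] [Algebra k Ω] [IsScalarTower k F Ω] [IsScalarTower k K Ω]

theorem aeval_pencilEquation (h : IsPencilField k Ω f₁ f₂ u g) (G : k[X][X]) :
    aeval (algebraMap F Ω f₂) (pencilEquation u g G) = algebraMap F Ω (aevalAeval f₁ f₂ G) := by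
  have hhom : ((aeval (algebraMap F Ω f₂) : K[X] →ₐ[K] Ω).restrictScalars k).comp
      (aevalAeval (C g + C u * X) X) =
      (IsScalarTower.toAlgHom k F Ω).comp (aevalAeval f₁ f₂ : k[X][X] →ₐ[k] F) := by
    apply bivariate_algHom_ext
    · simp [h.algebraMap_value_add]
    · simp
  exact AlgHom.congr_fun hhom G

variable [IsScalarTower F F[X] Ω]

theorem eq_top_of_forall_algebraMap_mem [IsFractionRing F[X] Ω] (h : IsPencilField k Ω f₁ f₂ u g)
    {S : Set F} (hS : IntermediateField.adjoin k S = ⊤) {H : IntermediateField K Ω}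
    (hH : ∀ f ∈ S, algebraMap F Ω f ∈ H) : H = ⊤ := by
  have hF : IntermediateField.adjoin k S ≤
      (H.restrictScalars k).comap (IsScalarTower.toAlgHom k F Ω) :=
    IntermediateField.adjoin_le_iff.2 hH
  have hu : algebraMap F[X] Ω X ∈ H := h.algebraMap_param ▸ H.algebraMap_mem u
  have hp (p : F[X]) : algebraMap F[X] Ω p ∈ H := by
    induction p using Polynomial.induction_on with
    | C c =>
      have : algebraMap F Ω c ∈ H := hF (by rw [hS]; trivial)
      rwa [IsScalarTower.algebraMap_apply F F[X] Ω] at this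
    | add p q hp hq => exact map_add (algebraMap F[X] Ω) p q ▸ add_mem hp hq
    | monomial n c ih =>
      rw [pow_succ, ← mul_assoc, map_mul]
      exact mul_mem ih hu
  refine eq_top_iff.2 fun x _ => ?_
  obtain ⟨a, b, -, rfl⟩ := IsFractionRing.div_surjective (A := F[X]) x
  exact div_mem (hp a) (hp b)

theorem adjoin_simple_eq_top [IsFractionRing F[X] Ω] (h : IsPencilField k Ω f₁ f₂ u g)
    (hgen : IntermediateField.adjoin k {f₁, f₂} = ⊤) :
    IntermediateField.adjoin K {algebraMap F Ω f₂} = ⊤ := by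
  have hf₂ := IntermediateField.mem_adjoin_simple_self K (algebraMap F Ω f₂)
  refine h.eq_top_of_forall_algebraMap_mem hgen ?_
  rintro f (rfl | rfl)
  · rw [← h.algebraMap_value_add]
    exact add_mem (IntermediateField.algebraMap_mem _ g)
      (mul_mem (IntermediateField.algebraMap_mem _ u) hf₂)
  · exact hf₂

theorem map_pencilEquation (h : IsPencilField k Ω f₁ f₂ u g) (G : k[X][X]) :
    (pencilEquation u g G).map (algebraMap K Ω) =
      (shear f₁ f₂ (G.map (mapRingHom (algebraMap k F)))).map (algebraMap F[X] Ω) := by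
  have hC (c : F) : algebraMap F[X] Ω (C c) = algebraMap F Ω c :=
    (IsScalarTower.algebraMap_apply F F[X] Ω c).symm
  have hhom : ((mapRingHom (algebraMap K Ω)).comp
      (aevalAeval (R := k) (C g + C u * X) X : k[X][X] →ₐ[k] K[X]).toRingHom) =
      (mapRingHom (algebraMap F[X] Ω)).comp ((shear f₁ f₂).toRingHom.comp
        (mapRingHom (mapRingHom (algebraMap k F)))) := by
    apply bivariate_ringHom_ext
    · intro c
      simp [shear_C_C, hC, ← IsScalarTower.algebraMap_apply]
    · simp [shear_C_X, hC, h.algebraMap_value, h.algebraMap_param]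
      ring
    · simp [shear_X]
  exact RingHom.congr_fun hhom G

/-- Over `F(u)` the equation `G(g + u y, y)` of `f₂` is irreducible up to powers of `y - f₂`. -/
theorem hasNoProperIntermediateField [IsAlgClosed k] [CharZero k] [FiniteDimensional K Ω]
    [IsFractionRing F[X] Ω] (h : IsPencilField k Ω f₁ f₂ u g)
    (hgen : IntermediateField.adjoin k {f₁, f₂} = ⊤) {G : k[X][X]} (hG : Irreducible G)
    (hG0 : aevalAeval f₁ f₂ G = 0) : HasNoProperIntermediateField K Ω := by
  have : CharZero K := charZero_of_injective_algebraMap (algebraMap k K).injective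
  have hGF : Prime (G.map (mapRingHom (algebraMap k F))) := (irreducible_map_bivariate hG).prime
  refine hasNoProperIntermediateField_of_forall_dvd_pow (φ := pencilEquation u g G)
    (Algebra.IsSeparable.isSeparable K (algebraMap F Ω f₂)) (h.adjoin_simple_eq_top hgen)
    ?_ fun a b hab => ?_
  · rw [h.aeval_pencilEquation, hG0, map_zero]
  · rw [h.map_pencilEquation] at hab
    exact exists_dvd_pow_of_map_shear_eq_mul hGF hab

end IsPencilField

end Primitive

/-! ### The generic member of a pencil as a hyperplane section -/

section Parameter

open Polynomial
open scoped Pointwise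

variable {k F : Type*} [CommRing k] [CommRing F] [Algebra k F]

/-- `f` is a parameter for `W` if `W ^ (j + 1)` is `W ^ j + f W ^ j` for all large `j`. For linear
forms on a curve, divided by a fixed one, this says that `f` and `1` have no common zero. -/
def IsParameter (W : Submodule k F) (f : F) : Prop :=
  ∀ᶠ j in Filter.atTop, W ^ (j + 1) ≤ W ^ j ⊔ f • W ^ j

variable {W : Submodule k F} {f₁ f₂ : F} {i : ℕ}

theorem mul_mem_satPow {f c : F} (hf : f ∈ W) (hc : c ∈ satPow W i) : f * c ∈ satPow W (i + 1) :=
  mul_satPow_le W i (Submodule.mul_mem_mul hf hc)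

theorem IsParameter.mem_satPow_of_mul_mem (hpar : IsParameter W f₁) {f : F}
    (h1 : f ∈ satPow W (i + 1)) (h2 : f₁ * f ∈ satPow W (i + 1)) : f ∈ satPow W i := by
  obtain ⟨j₀, hj₀⟩ := Filter.eventually_atTop.1 hpar
  obtain ⟨j₁, hj₁⟩ := mem_satPow.1 h1
  obtain ⟨j₂, hj₂⟩ := mem_satPow.1 h2
  have hmono := monotone_pow_add_div_pow W (i + 1)
  set j := max j₀ (max j₁ j₂)
  have hj₁' : f ∈ W ^ (j + (i + 1)) / W ^ j :=
    hmono (by omega) (Submodule.mem_div_iff_forall_mul_mem.2 hj₁)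
  have hj₂' : f₁ * f ∈ W ^ (j + (i + 1)) / W ^ j :=
    hmono (by omega) (Submodule.mem_div_iff_forall_mul_mem.2 hj₂)
  refine mem_satPow.2 ⟨j + 1, fun y hy => ?_⟩
  obtain ⟨a, ha, c, hc, rfl⟩ := Submodule.mem_sup.1 (hj₀ j (by omega) hy)
  obtain ⟨b, hb, rfl⟩ := (Submodule.mem_smul_pointwise_iff_exists _ _ _).1 hc
  have hab := add_mem (Submodule.mem_div_iff_forall_mul_mem.1 hj₁' a ha)
    (Submodule.mem_div_iff_forall_mul_mem.1 hj₂' b hb)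
  rw [show j + 1 + i = j + (i + 1) by omega]
  convert hab using 1
  rw [smul_eq_mul]
  ring

theorem coeff_C_sub_X_mul_C_mul_succ (p : F[X]) (a : ℕ) :
    ((C f₁ - X * C f₂) * p).coeff (a + 1) = f₁ * p.coeff (a + 1) - f₂ * p.coeff a := by
  rw [sub_mul, coeff_sub, coeff_C_mul, mul_assoc, coeff_X_mul, coeff_C_mul]

theorem coeff_C_sub_X_mul_C_mul_zero (p : F[X]) :
    ((C f₁ - X * C f₂) * p).coeff 0 = f₁ * p.coeff 0 := by
  rw [sub_mul, coeff_sub, coeff_C_mul, mul_assoc, coeff_X_mul_zero, sub_zero]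

theorem coeff_C_sub_X_mul_C_mul_mem (hf₁ : f₁ ∈ W) (hf₂ : f₂ ∈ W) {p : F[X]}
    (hp : ∀ a, p.coeff a ∈ satPow W i) (a : ℕ) :
    ((C f₁ - X * C f₂) * p).coeff a ∈ satPow W (i + 1) := by
  rcases a with _ | a
  · rw [coeff_C_sub_X_mul_C_mul_zero]
    exact mul_mem_satPow hf₁ (hp 0)
  · rw [coeff_C_sub_X_mul_C_mul_succ]
    exact sub_mem (mul_mem_satPow hf₁ (hp _)) (mul_mem_satPow hf₂ (hp _))

theorem IsParameter.coeff_mem_of_mul_mem (hpar : IsParameter W f₁) (hf₂ : f₂ ∈ W) {p : F[X]}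
    (hp : ∀ a, p.coeff a ∈ satPow W (i + 1))
    (hmul : ∀ a, ((C f₁ - X * C f₂) * p).coeff a ∈ satPow W (i + 1)) (a : ℕ) :
    p.coeff a ∈ satPow W i := by
  induction a with
  | zero =>
    have h := hmul 0
    rw [coeff_C_sub_X_mul_C_mul_zero] at h
    exact hpar.mem_satPow_of_mul_mem (hp 0) h
  | succ a ih =>
    have h := add_mem (hmul (a + 1)) (mul_mem_satPow hf₂ ih)
    rw [coeff_C_sub_X_mul_C_mul_succ, sub_add_cancel] at h
    exact hpar.mem_satPow_of_mul_mem (hp _) h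

variable {γ : F[X][X]}

theorem coeff_coeff_mem_satPow_add (h1 : (1 : F) ∈ W) (hf₁ : f₁ ∈ W) (hf₂ : f₂ ∈ W)
    (hγ : ∀ a b, ((γ * (X - C (C f₁ - X * C f₂))).coeff b).coeff a ∈ satPow W i) (m : ℕ) :
    ∀ b, γ.natDegree < b + m → ∀ a, (γ.coeff b).coeff a ∈ satPow W (i + m) := by
  induction m with
  | zero =>
    intro b hb a
    rw [coeff_eq_zero_of_natDegree_lt (p := γ) (by omega), coeff_zero]
    exact zero_mem _
  | succ m ih =>
    intro b hb a
    have hrec : γ.coeff b = (γ * (X - C (C f₁ - X * C f₂))).coeff (b + 1) +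
        (C f₁ - X * C f₂) * γ.coeff (b + 1) := by
      rw [coeff_mul_X_sub_C]
      ring
    rw [hrec, coeff_add]
    exact add_mem (satPow_mono h1 (by omega) (hγ a (b + 1)))
      (coeff_C_sub_X_mul_C_mul_mem hf₁ hf₂ (ih (b + 1) (by omega)) a)

theorem IsParameter.coeff_coeff_mem_of_succ (hpar : IsParameter W f₁) (hf₂ : f₂ ∈ W)
    (hγ : ∀ a b, ((γ * (X - C (C f₁ - X * C f₂))).coeff b).coeff a ∈ satPow W (i + 1))
    (hup : ∀ a b, (γ.coeff b).coeff a ∈ satPow W (i + 1)) (a b : ℕ) :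
    (γ.coeff b).coeff a ∈ satPow W i := by
  refine hpar.coeff_mem_of_mul_mem hf₂ (fun a => hup a b) (fun a => ?_) a
  rcases b with _ | b
  · have hrec : (C f₁ - X * C f₂) * γ.coeff 0 =
        - (γ * (X - C (C f₁ - X * C f₂))).coeff 0 := by
      rw [mul_coeff_zero, coeff_sub, coeff_X_zero, coeff_C_zero]
      ring
    rw [hrec, coeff_neg]
    exact neg_mem (hγ a 0)
  · have hrec : (C f₁ - X * C f₂) * γ.coeff (b + 1) =
        γ.coeff b - (γ * (X - C (C f₁ - X * C f₂))).coeff (b + 1) := by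
      rw [coeff_mul_X_sub_C]
      ring
    rw [hrec, coeff_sub]
    exact sub_mem (hup a b) (hγ a (b + 1))

/-- The recursion for the coefficients of the quotient gives them some degree in the saturation,
and the parameter improves it to the expected one. -/
theorem IsParameter.coeff_coeff_mem_of_mul_mem (hpar : IsParameter W f₁) (h1 : (1 : F) ∈ W)
    (hf₁ : f₁ ∈ W) (hf₂ : f₂ ∈ W)
    (hγ : ∀ a b, ((γ * (X - C (C f₁ - X * C f₂))).coeff b).coeff a ∈ satPow W (i + 1)) :
    ∀ a b, (γ.coeff b).coeff a ∈ satPow W i := by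
  have hlower (m : ℕ) : (∀ a b, (γ.coeff b).coeff a ∈ satPow W (i + m)) →
      ∀ a b, (γ.coeff b).coeff a ∈ satPow W i := by
    induction m with
    | zero => exact id
    | succ m ih => exact fun h => ih (hpar.coeff_coeff_mem_of_succ hf₂
        (fun a b => satPow_mono h1 (by omega) (hγ a b)) h)
  refine hlower (1 + (γ.natDegree + 1)) fun a b => ?_
  rw [← add_assoc]
  exact coeff_coeff_mem_satPow_add h1 hf₁ hf₂ hγ _ b (by omega) a

end Parameter

section Pencil

open Polynomial TensorProduct
open scoped Pointwise

section Substitution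

variable {k F A B : Type*} [Field k] [Field F] [Algebra k F] [CommRing A] [Algebra k A]
  [CommRing B] [Algebra k B]

variable (k F) in
/-- The substitution of `u` and `g` for the variables of a polynomial over `F`. -/
noncomputable def pencilSubst (u g : A) : F[X][X] →+* A ⊗[k] F :=
  eval₂RingHom (eval₂RingHom
    (Algebra.TensorProduct.includeRight : F →ₐ[k] A ⊗[k] F).toRingHom (u ⊗ₜ 1)) (g ⊗ₜ 1)

variable {u g : A}

@[simp] theorem pencilSubst_C_C (c : F) : pencilSubst k F u g (C (C c)) = 1 ⊗ₜ c := by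
  simp [pencilSubst]

@[simp] theorem pencilSubst_C_X : pencilSubst k F u g (C X) = u ⊗ₜ 1 := by
  simp [pencilSubst]

@[simp] theorem pencilSubst_X : pencilSubst k F u g X = g ⊗ₜ 1 := by
  simp [pencilSubst]

theorem pencilSubst_mem_baseChange {E : Submodule k F} {β : F[X][X]}
    (hβ : ∀ a b, (β.coeff b).coeff a ∈ E) : pencilSubst k F u g β ∈ E.baseChange A := by
  rw [pencilSubst, coe_eval₂RingHom, eval₂_eq_sum_range]
  refine sum_mem fun b _ => ?_
  rw [coe_eval₂RingHom, eval₂_eq_sum_range, Finset.sum_mul]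
  refine sum_mem fun a _ => ?_
  have hmonomial : (Algebra.TensorProduct.includeRight : F →ₐ[k] A ⊗[k] F).toRingHom
      ((β.coeff b).coeff a) * (u ⊗ₜ 1) ^ a * (g ⊗ₜ 1) ^ b =
      (u ^ a * g ^ b) ⊗ₜ[k] ((β.coeff b).coeff a) := by
    simp [Algebra.TensorProduct.tmul_pow]
  rw [hmonomial]
  exact Submodule.tmul_mem_baseChange_of_mem _ (hβ a b)

theorem pencilSubst_map (Q : k[X][X]) :
    pencilSubst k F u g (Q.map (mapRingHom (algebraMap k F))) = aevalAeval u g Q ⊗ₜ 1 := by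
  have hhom : (pencilSubst k F u g).comp (mapRingHom (mapRingHom (algebraMap k F))) =
      Algebra.TensorProduct.includeLeftRingHom.comp (aevalAeval (R := k) u g).toRingHom := by
    apply bivariate_ringHom_ext
    · intro c
      simp [Algebra.TensorProduct.tmul_one_eq_one_tmul]
    · simp
    · simp
  exact RingHom.congr_fun hhom Q

theorem map_pencilSubst (e : A →ₐ[k] B) (β : F[X][X]) :
    Algebra.TensorProduct.map e (AlgHom.id k F) (pencilSubst k F u g β) =
      pencilSubst k F (e u) (e g) β := by
  have hhom : (Algebra.TensorProduct.map e (AlgHom.id k F)).toRingHom.comp (pencilSubst k F u g) =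
      pencilSubst k F (e u) (e g) := by
    apply bivariate_ringHom_ext <;> simp
  exact RingHom.congr_fun hhom β

theorem pencilSubst_C_X_X_injective :
    Function.Injective (pencilSubst k F (C X : k[X][X]) X) := by
  let ρ : k[X][X] ⊗[k] F →ₐ[k] F[X][X] := Algebra.TensorProduct.lift
    (aevalAeval (C X) X) (IsScalarTower.toAlgHom k F F[X][X]) fun _ _ => Commute.all _ _
  have hρ : ρ.toRingHom.comp (pencilSubst k F (C X : k[X][X]) X) = RingHom.id _ := by
    apply bivariate_ringHom_ext <;> simp [ρ]
  exact Function.LeftInverse.injective (RingHom.congr_fun hρ)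

theorem pencilSubst_injective
    (hug : Function.Injective (aevalAeval u g : k[X][X] →ₐ[k] A)) :
    Function.Injective (pencilSubst k F u g) := by
  have hcomp : (pencilSubst k F u g : F[X][X] → A ⊗[k] F) =
      Algebra.TensorProduct.map (aevalAeval u g) (AlgHom.id k F) ∘
        pencilSubst k F (C X : k[X][X]) X := by
    ext β
    simp [map_pencilSubst]
  rw [hcomp]
  exact (Module.Flat.rTensor_preserves_injective_linearMap (M := F)
    (aevalAeval u g : k[X][X] →ₐ[k] A).toLinearMap hug).comp pencilSubst_C_X_X_injective

theorem coeff_coeff_map_mul_mem {E : Submodule k F} {β : F[X][X]}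
    (hβ : ∀ a b, (β.coeff b).coeff a ∈ E) (Q : k[X][X]) (a b : ℕ) :
    ((Q.map (mapRingHom (algebraMap k F)) * β).coeff b).coeff a ∈ E := by
  rw [coeff_mul, finsetSum_coeff]
  refine sum_mem fun x _ => ?_
  rw [coeff_mul]
  refine sum_mem fun y _ => ?_
  rw [coeff_map, coe_mapRingHom, coeff_map, ← Algebra.smul_def]
  exact E.smul_mem _ (hβ _ _)

theorem pencilSubst_map_mul (Q : k[X][X]) (β : F[X][X]) :
    pencilSubst k F u g (Q.map (mapRingHom (algebraMap k F)) * β) =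
      aevalAeval u g Q • pencilSubst k F u g β := by
  rw [map_mul, pencilSubst_map, Algebra.smul_def]
  rfl

variable (k) in
/-- The equation `f₁ - u f₂ - g` of a member of the pencil spanned by `f₁` and `f₂`. -/
noncomputable def pencilForm (f₁ f₂ : F) (u g : A) : A ⊗[k] F :=
  1 ⊗ₜ f₁ - u ⊗ₜ f₂ - g ⊗ₜ 1

theorem pencilSubst_X_sub_C (f₁ f₂ : F) :
    pencilSubst k F u g (X - C (C f₁ - X * C f₂)) = -pencilForm k f₁ f₂ u g := by
  simp [pencilForm]

end Substitution

section Denominators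

variable {k F K : Type*} [Field k] [Field F] [Algebra k F] [Field K] [Algebra k K] {u g : K}

theorem exists_aevalAeval_mul_eq (hadjoin : IntermediateField.adjoin k {u, g} = ⊤) (c : K) :
    ∃ P Q : k[X][X], aevalAeval u g Q ≠ 0 ∧ aevalAeval u g Q * c = aevalAeval u g P := by
  have hrange : Algebra.adjoin k {u, g} ≤ (aevalAeval u g : k[X][X] →ₐ[k] K).range := by
    rw [Algebra.adjoin_le_iff]
    rintro x (rfl | rfl)
    · exact ⟨C X, by simp⟩
    · exact ⟨X, by simp⟩
  obtain ⟨x, hx, y, hy, rfl⟩ := IntermediateField.mem_adjoin_iff_div.1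
    (show c ∈ IntermediateField.adjoin k {u, g} by rw [hadjoin]; trivial)
  obtain ⟨P, rfl⟩ := hrange hx
  obtain ⟨Q, rfl⟩ := hrange hy
  by_cases hQ : aevalAeval u g Q = 0
  · exact ⟨0, 1, by simp, by simp [hQ]⟩
  · exact ⟨P, Q, hQ, mul_div_cancel₀ _ hQ⟩

theorem exists_aevalAeval_smul_eq_pencilSubst
    (hadjoin : IntermediateField.adjoin k {u, g} = ⊤) {E : Submodule k F} {ζ : K ⊗[k] F}
    (hζ : ζ ∈ E.baseChange K) :
    ∃ (Q : k[X][X]) (β : F[X][X]), aevalAeval u g Q ≠ 0 ∧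
      (∀ a b, (β.coeff b).coeff a ∈ E) ∧ aevalAeval u g Q • ζ = pencilSubst k F u g β := by
  rw [Submodule.baseChange_eq_span] at hζ
  induction hζ using Submodule.span_induction with
  | mem x hx =>
    obtain ⟨f, hf, rfl⟩ := hx
    refine ⟨1, C (C f), by simp, fun a b => ?_, by simp⟩
    simp only [coeff_C, apply_ite (coeff · a), coeff_zero]
    split_ifs <;> first | exact hf | exact zero_mem _
  | zero => exact ⟨1, 0, by simp, by simp, by simp⟩
  | add x y _ _ hx hy =>
    obtain ⟨Q, β, hQ, hβ, hx⟩ := hx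
    obtain ⟨Q', β', hQ', hβ', hy⟩ := hy
    refine ⟨Q * Q', Q'.map (mapRingHom (algebraMap k F)) * β +
      Q.map (mapRingHom (algebraMap k F)) * β', ?_, fun a b => ?_, ?_⟩
    · rw [map_mul]
      exact mul_ne_zero hQ hQ'
    · rw [coeff_add, coeff_add]
      exact add_mem (coeff_coeff_map_mul_mem hβ _ a b) (coeff_coeff_map_mul_mem hβ' _ a b)
    · rw [map_add, pencilSubst_map_mul, pencilSubst_map_mul, ← hx, ← hy, smul_smul, smul_smul,
        map_mul, smul_add, mul_comm (aevalAeval u g Q')]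
  | smul c x _ hx =>
    obtain ⟨Q, β, hQ, hβ, hx⟩ := hx
    obtain ⟨P, Q', hQ', hc⟩ := exists_aevalAeval_mul_eq hadjoin c
    refine ⟨Q' * Q, P.map (mapRingHom (algebraMap k F)) * β, ?_, coeff_coeff_map_mul_mem hβ _, ?_⟩
    · rw [map_mul]
      exact mul_ne_zero hQ' hQ
    · rw [pencilSubst_map_mul, ← hx, smul_smul, smul_smul, ← hc, map_mul, mul_right_comm]

end Denominators

section Independence

variable {k F : Type*} [Field k] [Field F] [Algebra k F] {f₁ f₂ : F}

theorem transcendental_of_notMem_range [IsAlgClosed k] (hf : f₁ ∉ (algebraMap k F).range) :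
    Transcendental k f₁ := fun halg =>
  hf (minpoly.mem_range_of_degree_eq_one k f₁
    (IsAlgClosed.degree_eq_one_of_irreducible k (minpoly.irreducible halg.isIntegral)))

/-- A relation not divisible by `u` would give one for `f₁` at `u = 0`. -/
theorem eq_zero_of_eval_C_sub_X_mul_C_eq_zero (hf : Transcendental k f₁) {P : k[X][X]}
    (hP : (P.map (mapRingHom (algebraMap k F))).eval (C f₁ - X * C f₂) = 0) : P = 0 := by
  by_contra hne
  obtain ⟨Q, hPQ, hQ⟩ := (FiniteMultiplicity.of_prime_left (a := (C X : k[X][X]))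
    (prime_C_iff.2 prime_X) hne).exists_eq_pow_mul_and_not_dvd
  have hQ0 : (Q.map (mapRingHom (algebraMap k F))).eval (C f₁ - X * C f₂) = 0 := by
    rw [hPQ] at hP
    simpa using hP
  have hhom : ((evalRingHom 0).comp (evalRingHom (C f₁ - X * C f₂))).comp
      (mapRingHom (mapRingHom (algebraMap k F))) =
      (aeval f₁ : k[X] →ₐ[k] F).toRingHom.comp (mapRingHom (evalRingHom 0)) := by
    apply bivariate_ringHom_ext <;> simp
  have hroot : aeval f₁ (Q.map (evalRingHom 0)) = 0 :=
    (RingHom.congr_fun hhom Q).symm.trans ((congrArg (eval 0) hQ0).trans eval_zero)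
  have hQ0' : Q.map (evalRingHom 0) = 0 := transcendental_iff.1 hf _ hroot
  refine hQ ((C_dvd_iff_dvd_coeff _ _).2 fun b => ?_)
  rw [X_dvd_iff, coeff_zero_eq_eval_zero, ← coe_evalRingHom, ← coeff_map, hQ0', coeff_zero]

end Independence

section Evaluation

variable (k F K Ω : Type*) [Field k] [Field F] [Algebra k F] [Field K] [Algebra k K]
  [Field Ω] [Algebra k Ω] [Algebra F Ω] [IsScalarTower k F Ω] [Algebra K Ω] [IsScalarTower k K Ω]

/-- The multiplication map `K ⊗ F → Ω`, the evaluation at the generic point of the pencil. -/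
noncomputable def pencilEval : K ⊗[k] F →ₐ[K] Ω :=
  Algebra.TensorProduct.lift (Algebra.ofId K Ω) (IsScalarTower.toAlgHom k F Ω)
    fun _ _ => Commute.all _ _

@[simp] theorem pencilEval_tmul (c : K) (f : F) :
    pencilEval k F K Ω (c ⊗ₜ f) = algebraMap K Ω c * algebraMap F Ω f := by
  simp [pencilEval, Algebra.ofId_apply]

end Evaluation

namespace IsPencilField

variable {k F K Ω : Type*} [Field k] [Field F] [Algebra k F] [Field K] [Algebra k K]
  [Field Ω] [Algebra k Ω] [Algebra F Ω] [IsScalarTower k F Ω] [Algebra K Ω] [IsScalarTower k K Ω]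
  [Algebra F[X] Ω] {f₁ f₂ : F} {u g : K}

theorem pencilEval_pencilForm (h : IsPencilField k Ω f₁ f₂ u g) :
    pencilEval k F K Ω (pencilForm k f₁ f₂ u g) = 0 := by
  simp [pencilForm, h.algebraMap_value, h.algebraMap_param]

variable [IsScalarTower F F[X] Ω]

theorem pencilEval_pencilSubst (h : IsPencilField k Ω f₁ f₂ u g) (β : F[X][X]) :
    pencilEval k F K Ω (pencilSubst k F u g β) =
      algebraMap F[X] Ω (β.eval (C f₁ - X * C f₂)) := by
  have hC (c : F) : algebraMap F[X] Ω (C c) = algebraMap F Ω c :=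
    (IsScalarTower.algebraMap_apply F F[X] Ω c).symm
  have hhom : (pencilEval k F K Ω).toRingHom.comp (pencilSubst k F u g) =
      (algebraMap F[X] Ω).comp (evalRingHom (C f₁ - X * C f₂)) := by
    apply bivariate_ringHom_ext
    · intro c
      simp [hC]
    · simp [h.algebraMap_param]
    · simp [h.algebraMap_value, hC]
      ring
  exact RingHom.congr_fun hhom β

variable [IsFractionRing F[X] Ω]

theorem aevalAeval_injective [IsAlgClosed k] (h : IsPencilField k Ω f₁ f₂ u g)
    (hf₁ : f₁ ∉ (algebraMap k F).range) :
    Function.Injective (aevalAeval u g : k[X][X] →ₐ[k] K) := by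
  refine (injective_iff_map_eq_zero _).2 fun P hP => ?_
  refine eq_zero_of_eval_C_sub_X_mul_C_eq_zero (f₂ := f₂) (transcendental_of_notMem_range hf₁) ?_
  apply IsFractionRing.injective F[X] Ω
  rw [← h.pencilEval_pencilSubst, pencilSubst_map, hP, TensorProduct.zero_tmul, map_zero, map_zero]

/-- An element killed by the form is, up to a denominator, a polynomial in `u` and `g` killed by
`g - (f₁ - u f₂)`, and `u`, `g` are independent. -/
theorem isLeftRegular_pencilForm [IsAlgClosed k] (h : IsPencilField k Ω f₁ f₂ u g)
    (hf₁ : f₁ ∉ (algebraMap k F).range) : IsLeftRegular (pencilForm k f₁ f₂ u g) := by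
  refine isLeftRegular_of_non_zero_divisor _ fun ζ hζ => ?_
  obtain ⟨Q, β, hQ, -, hβ⟩ := exists_aevalAeval_smul_eq_pencilSubst (ζ := ζ) (E := ⊤)
    h.adjoin_eq_top (by simp)
  have hinj := pencilSubst_injective (F := F) (h.aevalAeval_injective hf₁)
  have hprod : (X - C (C f₁ - X * C f₂)) * β = 0 := by
    refine hinj ?_
    rw [map_mul, pencilSubst_X_sub_C, ← hβ, mul_smul_comm, neg_mul, hζ, neg_zero, smul_zero,
      map_zero]
  rw [(mul_eq_zero.1 hprod).resolve_left (X_sub_C_ne_zero _), map_zero] at hβ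
  exact (smul_eq_zero.1 hβ).resolve_left hQ

/-- Write an element of the kernel as a polynomial in `u` and `g` and divide it by
`g - (f₁ - u f₂)`. -/
theorem inf_ker_pencilEval_le (h : IsPencilField k Ω f₁ f₂ u g) {W : Submodule k F}
    (hpar : IsParameter W f₁) (h1 : (1 : F) ∈ W) (hf₁ : f₁ ∈ W) (hf₂ : f₂ ∈ W) (i : ℕ) :
    (satPow W (i + 1)).baseChange K ⊓ LinearMap.ker (pencilEval k F K Ω).toLinearMap ≤
      pencilForm k f₁ f₂ u g • (satPow W i).baseChange K := by
  rintro ζ ⟨hζ, hζ0⟩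
  have hζ0' : pencilEval k F K Ω ζ = 0 := hζ0
  obtain ⟨Q, β, hQ, hβ, hQζ⟩ := exists_aevalAeval_smul_eq_pencilSubst h.adjoin_eq_top hζ
  have hroot : β.eval (C f₁ - X * C f₂) = 0 := by
    apply IsFractionRing.injective F[X] Ω
    rw [← h.pencilEval_pencilSubst, ← hQζ, map_smul, hζ0', smul_zero, map_zero]
  obtain ⟨γ, rfl⟩ := dvd_iff_isRoot.2 hroot
  have hγ := hpar.coeff_coeff_mem_of_mul_mem h1 hf₁ hf₂ (γ := γ) fun a b => by
    rw [mul_comm]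
    exact hβ a b
  refine (Submodule.mem_smul_pointwise_iff_exists _ _ _).2
    ⟨-(aevalAeval u g Q)⁻¹ • pencilSubst k F u g γ,
      Submodule.smul_mem _ _ (pencilSubst_mem_baseChange hγ), ?_⟩
  rw [map_mul, pencilSubst_X_sub_C] at hQζ
  rw [smul_eq_mul, neg_smul, mul_neg, mul_smul_comm, ← smul_neg, inv_smul_eq_iff₀ hQ, hQζ, neg_mul]

theorem genericSection [IsAlgClosed k] [CharZero k] (h : IsPencilField k Ω f₁ f₂ u g)
    {W : Submodule k F} (hpar : IsParameter W f₁) (h1 : (1 : F) ∈ W) (hf₁ : f₁ ∈ W) (hf₂ : f₂ ∈ W)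
    (hf₁' : f₁ ∉ (algebraMap k F).range)
    (hgen : IntermediateField.adjoin k {f₁, f₂} = ⊤)
    {G : k[X][X]} (hG : Irreducible G) (hG0 : aevalAeval f₁ f₂ G = 0) :
    GenericSection W (pencilEval k F K Ω) (pencilForm k f₁ f₂ u g) where
  mem := sub_mem (sub_mem (Submodule.tmul_mem_baseChange_of_mem _ hf₁)
    (Submodule.tmul_mem_baseChange_of_mem _ hf₂)) (Submodule.tmul_mem_baseChange_of_mem _ h1)
  regular := h.isLeftRegular_pencilForm hf₁'
  ev_eq_zero := h.pencilEval_pencilForm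
  inf_ker_le := h.inf_ker_pencilEval_le hpar h1 hf₁ hf₂
  generate S _ hS := by
    have hmem (f : F) (hf : f ∈ W) : algebraMap F Ω f ∈ S := by simpa using hS f hf
    have htop : Algebra.IsAlgebraic.toIntermediateField S = ⊤ :=
      h.eq_top_of_forall_algebraMap_mem hgen (by
        rintro f (rfl | rfl)
        · exact hmem _ hf₁
        · exact hmem _ hf₂)
    exact congrArg IntermediateField.toSubalgebra htop
  primitive _ := h.hasNoProperIntermediateField hgen hG hG0

end IsPencilField

end Pencil

/-! ### Choice of the pencil -/

section Choice

open Module TensorProduct Polynomial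
open scoped Pointwise

/-- The conclusion of the Hilbert function count for the saturated powers of a space `W` of sections
of degree `s` on a curve of arithmetic genus `p`. -/
structure SaturationEstimates {k F : Type*} [Field k] [CommRing F] [Algebra k F]
    (W : Submodule k F) (s p : ℤ) : Prop where
  fg : ∀ i, (satPow W i).FG
  finrank_eq : ∀ i, 1 ≤ i → (finrank k (satPow W i) : ℤ) = s * i + 1 - p
  finrank_sub_le : ∀ i, 1 ≤ i → (finrank k (satPow W (i + 1)) : ℤ) - finrank k ↥(W ^ (i + 1)) ≤
    max 0 ((finrank k (satPow W i) : ℤ) - finrank k ↥(W ^ i) - 1)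

variable {k F : Type*} [Field k] [Field F] [Algebra k F] {W : Submodule k F} {f₁ f₂ : F}

namespace IsParameter

theorem exists_pow_le_span (hpar : IsParameter W f₁) (h1 : (1 : F) ∈ W) :
    ∃ n, ∀ j, W ^ j ≤ (Submodule.span (IntermediateField.adjoin k {f₁})
      ((W ^ n : Submodule k F) : Set F)).restrictScalars k := by
  obtain ⟨n, hn⟩ := Filter.eventually_atTop.1 hpar
  refine ⟨n, fun j => (submodule_pow_mono h1 (le_max_right n j)).trans ?_⟩
  induction max n j, le_max_left n j using Nat.le_induction with
  | base => exact Submodule.subset_span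
  | succ j hj ih =>
    refine (hn j hj).trans (sup_le ih fun x hx => ?_)
    obtain ⟨y, hy, rfl⟩ := (Submodule.mem_smul_pointwise_iff_exists _ _ _).1 hx
    exact Submodule.smul_mem _
      (⟨f₁, IntermediateField.mem_adjoin_simple_self k f₁⟩ : IntermediateField.adjoin k {f₁})
      (ih hy)

/-- The span of a large power of `W` over `k(f₁)` is a ring, hence a field. -/
theorem finiteDimensional_adjoin [FiniteDimensional k W] (hpar : IsParameter W f₁)
    (h1 : (1 : F) ∈ W) (htop : IntermediateField.adjoin k (W : Set F) = ⊤) :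
    FiniteDimensional (IntermediateField.adjoin k {f₁}) F := by
  obtain ⟨n, hn⟩ := hpar.exists_pow_le_span h1
  set K := IntermediateField.adjoin k {f₁}
  set M := Submodule.span K ((W ^ n : Submodule k F) : Set F)
  have hM : M.FG := by
    obtain ⟨t, ht⟩ := submodule_pow_fg W n
    exact ⟨t, by rw [← Submodule.span_span_of_tower k K, ht]⟩
  have hmul : M * M ≤ M := by
    rw [Submodule.span_mul_span, Submodule.span_le]
    rintro _ ⟨x, hx, y, hy, rfl⟩
    exact hn (n + n) (pow_add W n n ▸ Submodule.mul_mem_mul hx hy)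
  let S : Subalgebra K F := M.toSubalgebra
    (Submodule.subset_span (one_mem_submodule_pow h1 n))
    fun x y hx hy => hmul (Submodule.mul_mem_mul hx hy)
  have : FiniteDimensional K S := Module.Finite.iff_fg.2 hM
  have hle : IntermediateField.adjoin k (W : Set F) ≤
      (Algebra.IsAlgebraic.toIntermediateField S).restrictScalars k :=
    IntermediateField.adjoin_le_iff.2 fun x hx => hn 1 (by rwa [pow_one])
  have hMtop : M = ⊤ := eq_top_iff.2 fun x _ => hle (htop ▸ IntermediateField.mem_top)
  exact ⟨hMtop ▸ hM⟩

end IsParameter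

/-- There are finitely many proper intermediate fields of `F / k(f₁)`, and they do not cover `W`. -/
theorem exists_mem_adjoin_pair_eq_top [CharZero k]
    [FiniteDimensional (IntermediateField.adjoin k {f₁}) F]
    (htop : IntermediateField.adjoin k (W : Set F) = ⊤) :
    ∃ f₂ ∈ W, IntermediateField.adjoin k {f₁, f₂} = ⊤ := by
  set K := IntermediateField.adjoin k {f₁}
  have : CharZero K := charZero_of_injective_algebraMap (algebraMap k K).injective
  have : Finite (IntermediateField K F) :=
    (Field.exists_primitive_element_iff_finite_intermediateField K F).1
      ⟨inferInstance, Field.exists_primitive_element K F⟩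
  let p (H : {H : IntermediateField K F // H ≠ ⊤}) : Subspace k W :=
    (H.1.restrictScalars k).toSubalgebra.toSubmodule.comap W.subtype
  have hcover : ⋃ H, (p H : Set W) ≠ Set.univ := by
    intro h
    obtain ⟨H, hH⟩ := Subspace.exists_eq_top_of_iUnion_eq_univ h
    have hle : IntermediateField.adjoin k (W : Set F) ≤ H.1.restrictScalars k :=
      IntermediateField.adjoin_le_iff.2 fun x hx => by
        have : (⟨x, hx⟩ : W) ∈ p H := hH ▸ Submodule.mem_top
        exact this
    exact H.2 (eq_top_iff.2 fun x _ => hle (htop ▸ IntermediateField.mem_top))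
  obtain ⟨f₂, hf₂⟩ := (Set.ne_univ_iff_exists_notMem _).1 hcover
  have hf₂top : IntermediateField.adjoin K {(f₂ : F)} = ⊤ := by
    by_contra hne
    exact hf₂ (Set.mem_iUnion.2 ⟨⟨_, hne⟩, IntermediateField.mem_adjoin_simple_self K (f₂ : F)⟩)
  refine ⟨f₂, f₂.2, ?_⟩
  rw [← Set.singleton_union, ← IntermediateField.adjoin_adjoin_left k {f₁} {(f₂ : F)}]
  exact (congrArg (IntermediateField.restrictScalars k) hf₂top).trans
    IntermediateField.restrictScalars_top

open scoped IntermediateField.algebraAdjoinAdjoin in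
theorem exists_irreducible_aevalAeval_eq_zero
    (halg : IsAlgebraic (IntermediateField.adjoin k {f₁}) f₂) :
    ∃ G : k[X][X], Irreducible G ∧ aevalAeval f₁ f₂ G = 0 := by
  obtain ⟨p, hp0, hp⟩ := (IsFractionRing.isAlgebraic_iff (Algebra.adjoin k {f₁})
    (IntermediateField.adjoin k {f₁}) F).2 halg
  let e : k[X] →ₐ[k] Algebra.adjoin k {f₁} :=
    aeval (⟨f₁, Algebra.self_mem_adjoin_singleton k f₁⟩ : Algebra.adjoin k {f₁})
  have he : Function.Surjective e := by
    rintro ⟨y, hy⟩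
    obtain ⟨q, rfl⟩ := Algebra.adjoin_singleton_eq_range_aeval k f₁ ▸ hy
    exact ⟨q, Subtype.ext (by simp [e, aeval_subalgebra_coe])⟩
  obtain ⟨P, rfl⟩ := Polynomial.map_surjective e.toRingHom he p
  have hhom : (aevalAeval f₁ f₂ : k[X][X] →ₐ[k] F).toRingHom =
      (aeval f₂ : (Algebra.adjoin k {f₁})[X] →ₐ[_] F).toRingHom.comp (mapRingHom e.toRingHom) := by
    apply bivariate_ringHom_ext
    · intro c
      simp [e]
    · simp [e]
    · simp
  have hP : aevalAeval f₁ f₂ P = 0 := (RingHom.congr_fun hhom P).trans hp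
  have hprime : (RingHom.ker (aevalAeval f₁ f₂ : k[X][X] →ₐ[k] F)).IsPrime := RingHom.ker_isPrime _
  obtain ⟨G, hG, hGprime⟩ := hprime.exists_mem_prime_of_ne_bot fun hbot => hp0 (by
    have : P ∈ RingHom.ker (aevalAeval f₁ f₂ : k[X][X] →ₐ[k] F) := hP
    rw [hbot, Ideal.mem_bot] at this
    rw [this, Polynomial.map_zero])
  exact ⟨G, hGprime.irreducible, hG⟩

theorem exists_isPencilField (k : Type*) {F Ω : Type*} [Field k] [Field F] [Field Ω] [Algebra k Ω]
    [Algebra F[X] Ω] [Algebra F Ω] (f₁ f₂ : F) :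
    ∃ (K : IntermediateField k Ω) (u g : K), IsPencilField k Ω f₁ f₂ u g := by
  set u := algebraMap F[X] Ω X
  set g := algebraMap F Ω f₁ - u * algebraMap F Ω f₂
  let K := IntermediateField.adjoin k {u, g}
  refine ⟨K, ⟨u, IntermediateField.subset_adjoin k _ (by simp)⟩,
    ⟨g, IntermediateField.subset_adjoin k _ (by simp)⟩, rfl, rfl, ?_⟩
  apply IntermediateField.lift_injective K
  rw [IntermediateField.lift_adjoin, IntermediateField.lift_top, Set.image_pair]

namespace IsParameter

/-- A constant parameter would make the powers of `W` stop growing. -/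
theorem notMem_range (hpar : IsParameter W f₁) (h1 : (1 : F) ∈ W) {s p : ℤ} {N : ℕ} (hs0 : s ≠ 0)
    (hw : ∀ t : ℕ, N ≤ t → (finrank k ↥(W ^ t) : ℤ) = s * t + 1 - p) :
    f₁ ∉ (algebraMap k F).range := by
  rintro ⟨c, rfl⟩
  obtain ⟨n, hn⟩ := Filter.eventually_atTop.1 hpar
  have heq : W ^ (max N n + 1) = W ^ max N n := by
    refine le_antisymm ((hn _ (le_max_right _ _)).trans (sup_le le_rfl fun x hx => ?_))
      (submodule_pow_mono h1 (Nat.le_succ _))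
    obtain ⟨y, hy, rfl⟩ := (Submodule.mem_smul_pointwise_iff_exists _ _ _).1 hx
    rw [smul_eq_mul, ← Algebra.smul_def]
    exact Submodule.smul_mem _ c hy
  have hsucc := hw (max N n + 1) (by omega)
  rw [heq, hw (max N n) (by omega)] at hsucc
  push_cast at hsucc
  exact hs0 (by linarith)

theorem exists_genericSection [IsAlgClosed k] [CharZero k] [FiniteDimensional k W]
    (hpar : IsParameter W f₁) (h1 : (1 : F) ∈ W) (hf₁ : f₁ ∈ W)
    (hf₁' : f₁ ∉ (algebraMap k F).range) (htop : IntermediateField.adjoin k (W : Set F) = ⊤)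
    (Ω : Type*) [Field Ω] [Algebra k Ω] [Algebra F Ω] [Algebra F[X] Ω] [IsScalarTower k F Ω]
    [IsScalarTower F F[X] Ω] [IsFractionRing F[X] Ω] :
    ∃ (K : IntermediateField k Ω) (ℓ : K ⊗[k] F), GenericSection W (pencilEval k F K Ω) ℓ := by
  have := hpar.finiteDimensional_adjoin h1 htop
  obtain ⟨f₂, hf₂, hgen⟩ := exists_mem_adjoin_pair_eq_top (f₁ := f₁) htop
  obtain ⟨G, hG, hG0⟩ := exists_irreducible_aevalAeval_eq_zero
    (IsAlgebraic.of_finite (IntermediateField.adjoin k {f₁}) f₂)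
  obtain ⟨K, u, g, hK⟩ := exists_isPencilField k (Ω := Ω) f₁ f₂
  exact ⟨K, _, hK.genericSection hpar h1 hf₁ hf₂ hf₁' hgen hG hG0⟩

theorem saturationEstimates_of_adjoin_eq_top [IsAlgClosed k] [CharZero k] [FiniteDimensional k W]
    (hpar : IsParameter W f₁) (h1 : (1 : F) ∈ W) (hf₁ : f₁ ∈ W)
    (htop : IntermediateField.adjoin k (W : Set F) = ⊤) {s p : ℤ} {N : ℕ} (hs0 : s ≠ 0)
    (hw : ∀ t : ℕ, N ≤ t → (finrank k ↥(W ^ t) : ℤ) = s * t + 1 - p)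
    (hs : s ≤ 2 * finrank k W - 4) : SaturationEstimates W s p := by
  obtain ⟨K, ℓ, h⟩ := hpar.exists_genericSection h1 hf₁ (hpar.notMem_range h1 hs0 hw) htop
    (FractionRing F[X])
  have := h.finiteDimensional h1 hw
  exact
    { fg := h.satPow_fg h1
      finrank_eq := fun i hi => by rw [h.finrank_satPow_eq h1 hw hs hi, add_sub_assoc]
      finrank_sub_le := fun i hi => h.finrank_satPow_sub_finrank_pow_le h1 hw hs hi }

end IsParameter

end Choice

/-! ### Existence of a parameter -/

section ExistsParameter

open Module
open scoped Pointwise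

section Avoidance

variable {k A D : Type*} [Field k] [Infinite k] [CommRing A] [Algebra k A] [IsNoetherianRing A]
  [AddCommGroup D] [Module A D] [Module.Finite A D]

variable (D) in
theorem exists_mem_forall_associatedPrimes_le (V : Submodule k A) :
    ∃ ℓ ∈ V, ∀ P ∈ associatedPrimes A D, ℓ ∈ P → V ≤ P.restrictScalars k := by
  have : Finite (associatedPrimes A D) := associatedPrimes.finite A D
  let p (P : {P : associatedPrimes A D // ¬ V ≤ P.1.restrictScalars k}) : Subspace k V :=
    (P.1.1.restrictScalars k).comap V.subtype
  have hcover : ⋃ P, (p P : Set V) ≠ Set.univ := fun h => by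
    obtain ⟨P, hP⟩ := Subspace.exists_eq_top_of_iUnion_eq_univ h
    refine P.2 fun x hx => ?_
    have : (⟨x, hx⟩ : V) ∈ p P := hP ▸ Submodule.mem_top
    exact this
  obtain ⟨ℓ, hℓ⟩ := (Set.ne_univ_iff_exists_notMem _).1 hcover
  refine ⟨ℓ, ℓ.2, fun P hP hℓP => ?_⟩
  by_contra hV
  exact hℓ (Set.mem_iUnion.2 ⟨⟨⟨P, hP⟩, hV⟩, hℓP⟩)

/-- All associated primes of the part killed by `ℓ` contain `I`, so a power of `I` annihilates it,
and by Artin-Rees it meets high multiples of `I` in `0`. -/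
theorem exists_forall_mem_pow_smul_top_eq_zero {I : Ideal A} {ℓ : A}
    (hℓ : ∀ P ∈ associatedPrimes A D, ℓ ∈ P → I ≤ P) :
    ∃ N : ℕ, ∀ i, N ≤ i → ∀ d ∈ I ^ i • (⊤ : Submodule A D), ℓ • d = 0 → d = 0 := by
  let T : Submodule A D := LinearMap.ker (LinearMap.lsmul A D ℓ)
  have hrad : I ≤ (Module.annihilator A T).radical := by
    rw [← Ideal.sInf_minimalPrimes]
    refine le_sInf fun P hP => hℓ P (associatedPrimes.subset_of_injective T.subtype_injective
      (Module.associatedPrimes.minimalPrimes_annihilator_subset_associatedPrimes A T hP)) ?_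
    exact hP.1.2 (Module.mem_annihilator.2 fun d => Subtype.ext d.2)
  obtain ⟨q, hq⟩ := Ideal.exists_pow_le_of_le_radical_of_fg hrad (IsNoetherian.noetherian I)
  obtain ⟨c, hc⟩ := Ideal.exists_pow_inf_eq_pow_smul I T
  refine ⟨c + q, fun i hi d hd hℓd => ?_⟩
  have hdT : d ∈ I ^ (i - c) • (I ^ c • ⊤ ⊓ T) := hc i (by omega) ▸ Submodule.mem_inf.2 ⟨hd, hℓd⟩
  refine (Submodule.mem_bot A).1 ((Submodule.smul_le.2 fun a ha d hd => ?_) hdT)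
  have hkill := Module.mem_annihilator.1 (hq (Ideal.pow_le_pow_right (by omega) ha)) ⟨d, hd.2⟩
  exact congrArg Subtype.val hkill

theorem exists_mem_forall_mul_mem_imp_mem (V : Submodule k A) (J : Ideal A) :
    ∃ ℓ ∈ V, ∃ N : ℕ, ∀ i, N ≤ i → ∀ z ∈ V ^ i, ℓ * z ∈ J → z ∈ J := by
  obtain ⟨ℓ, hℓV, hℓ⟩ := exists_mem_forall_associatedPrimes_le (A ⧸ J) V
  obtain ⟨N, hN⟩ := exists_forall_mem_pow_smul_top_eq_zero (D := A ⧸ J)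
    (I := Ideal.span (V : Set A)) fun P hP hℓP => Ideal.span_le.2 (hℓ P hP hℓP)
  refine ⟨ℓ, hℓV, N, fun i hi z hz hℓz => Ideal.Quotient.eq_zero_iff_mem.1 (hN i hi _ ?_ ?_)⟩
  · have hzI : z ∈ Ideal.span (V : Set A) ^ i := by
      rw [V.pow_eq_span_pow_set] at hz
      rw [Ideal.span, Submodule.span_pow]
      exact Submodule.span_le_restrictScalars k A _ hz
    have := Submodule.smul_mem_smul hzI (Submodule.mem_top (x := (1 : A ⧸ J)))
    rwa [Algebra.smul_def, mul_one] at this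
  · exact Ideal.Quotient.eq_zero_iff_mem.2 hℓz

end Avoidance

variable {k F : Type*} [Field k] [Field F] [Algebra k F]

theorem isParameter_of_forall_mul_mem {W : Submodule k F} [FiniteDimensional k W] {f : F} {s p : ℤ}
    {N : ℕ} (h1 : (1 : F) ∈ W) (hf : f ∈ W) (hs0 : 0 < s)
    (hw : ∀ t : ℕ, N ≤ t → (finrank k ↥(W ^ t) : ℤ) = s * t + 1 - p)
    (hreg : ∀ i, N ≤ i → ∀ z ∈ W ^ (i + 1), f * z ∈ W ^ (i + 1) → z ∈ W ^ i) :
    IsParameter W f := by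
  refine Filter.eventually_atTop.2 ⟨N + 1, fun j hj => ?_⟩
  obtain ⟨i, rfl⟩ : ∃ i, j = i + 1 := ⟨j - 1, by omega⟩
  have hfin (i : ℕ) : FiniteDimensional k ↥(W ^ i) := Module.Finite.iff_fg.2 (submodule_pow_fg W i)
  have hlow := hw i (by omega)
  have hmid := hw (i + 1) (by omega)
  have hhigh := hw (i + 1 + 1) (by omega)
  push_cast at hmid hhigh
  have hf0 : f ≠ 0 := by
    rintro rfl
    have := Submodule.finrank_mono fun z hz => hreg i (by omega) z hz (by simp)
    linarith
  have hfin' (i : ℕ) : FiniteDimensional k ↥(f • W ^ i) :=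
    Module.Finite.iff_fg.2 ((submodule_pow_fg W i).map _)
  have hinf : W ^ (i + 1) ⊓ f • W ^ (i + 1) ≤ f • W ^ i := fun x hx => by
    obtain ⟨z, hz, rfl⟩ := (Submodule.mem_smul_pointwise_iff_exists _ _ _).1 hx.2
    exact Submodule.smul_mem_pointwise_smul _ _ _ (hreg i (by omega) z hz hx.1)
  have hle : W ^ (i + 1) ⊔ f • W ^ (i + 1) ≤ W ^ (i + 1 + 1) := by
    refine sup_le (submodule_pow_mono h1 (Nat.le_succ _)) fun x hx => ?_
    obtain ⟨z, hz, rfl⟩ := (Submodule.mem_smul_pointwise_iff_exists _ _ _).1 hx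
    exact pow_succ' W (i + 1) ▸ Submodule.mul_mem_mul hf hz
  have hsum := Submodule.finrank_sup_add_finrank_inf_eq (W ^ (i + 1)) (f • W ^ (i + 1))
  have hmono := Submodule.finrank_mono hinf
  rw [finrank_pointwise_smul hf0] at hsum hmono
  refine (Submodule.eq_of_le_of_finrank_le hle ?_).ge
  zify at hsum hmono ⊢
  linarith

end ExistsParameter

section Transfer

open Module
open scoped Pointwise

section Map

variable {k L F : Type*} [Field k] [Field L] [Field F] [Algebra k L] [Algebra k F]
  {v : L →ₐ[k] F} {W : Submodule k L}

theorem map_satPow (h1 : (1 : L) ∈ W) (i : ℕ) :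
    (satPow W i).map v.toLinearMap = satPow (W.map v.toLinearMap) i := by
  have hv : Function.Injective v.toLinearMap := v.injective
  ext x
  constructor
  · rintro ⟨y, hy, rfl⟩
    obtain ⟨j, hj⟩ := mem_satPow.1 hy
    refine mem_satPow.2 ⟨j, fun z hz => ?_⟩
    rw [← Submodule.map_pow] at hz ⊢
    obtain ⟨z, hz, rfl⟩ := hz
    exact ⟨y * z, hj z hz, map_mul v y z⟩
  · intro hx
    obtain ⟨j, hj⟩ := mem_satPow.1 hx
    simp only [← Submodule.map_pow] at hj
    have hx1 := hj 1 ⟨1, one_mem_submodule_pow h1 j, map_one v⟩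
    rw [mul_one] at hx1
    obtain ⟨y, -, rfl⟩ := hx1
    refine ⟨y, mem_satPow.2 ⟨j, fun z hz => ?_⟩, rfl⟩
    obtain ⟨w, hw, hwz⟩ := hj (v z) ⟨z, hz, rfl⟩
    rwa [← hv (hwz.trans (map_mul v y z).symm)]

theorem IsParameter.of_map {f : L} (hpar : IsParameter (W.map v.toLinearMap) (v f)) :
    IsParameter W f := by
  have hv : Function.Injective v.toLinearMap := v.injective
  have hsmul (P : Submodule k L) : (f • P).map v.toLinearMap = v f • P.map v.toLinearMap := by
    ext x
    simp [Submodule.mem_smul_pointwise_iff_exists]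
  refine hpar.mono fun j hj => ?_
  rwa [← Submodule.map_pow, ← Submodule.map_pow, ← hsmul, ← Submodule.map_sup,
    Submodule.map_le_map_iff_of_injective hv] at hj

theorem finrank_map_algHom (v : L →ₐ[k] F) (P : Submodule k L) :
    finrank k (P.map v.toLinearMap) = finrank k P :=
  (Submodule.equivMapOfInjective v.toLinearMap v.injective P).finrank_eq.symm

theorem SaturationEstimates.map (h1 : (1 : L) ∈ W) {s p : ℤ} (h : SaturationEstimates W s p) :
    SaturationEstimates (W.map v.toLinearMap) s p where
  fg i := map_satPow (v := v) h1 i ▸ (h.fg i).map _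
  finrank_eq i hi := by
    rw [← map_satPow h1, finrank_map_algHom]
    exact h.finrank_eq i hi
  finrank_sub_le i hi := by
    rw [← map_satPow h1, ← map_satPow h1, ← Submodule.map_pow, ← Submodule.map_pow]
    simp only [finrank_map_algHom]
    exact h.finrank_sub_le i hi

end Map

variable {k F : Type*} [Field k] [Field F] [Algebra k F]

theorem exists_map_val_eq_adjoin_eq_top (W : Submodule k F) :
    ∃ (L : IntermediateField k F) (W' : Submodule k L),
      W'.map L.val.toLinearMap = W ∧ IntermediateField.adjoin k (W' : Set L) = ⊤ := by
  let L := IntermediateField.adjoin k (W : Set F)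
  let W' : Submodule k L := W.comap L.val.toLinearMap
  have hmap : W'.map L.val.toLinearMap = W := by
    rw [Submodule.map_comap_eq, inf_eq_right]
    exact fun x hx => ⟨⟨x, IntermediateField.subset_adjoin k _ hx⟩, rfl⟩
  have himage : Subtype.val '' (W' : Set L) = (W : Set F) := congrArg SetLike.coe hmap
  refine ⟨L, W', hmap, IntermediateField.lift_injective L ?_⟩
  rw [IntermediateField.lift_adjoin, IntermediateField.lift_top, himage]

theorem IsParameter.saturationEstimates [IsAlgClosed k] [CharZero k] {W : Submodule k F}
    [FiniteDimensional k W] {f : F} (hpar : IsParameter W f) (h1 : (1 : F) ∈ W) (hf : f ∈ W)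
    {s p : ℤ} {N : ℕ} (hs0 : s ≠ 0)
    (hw : ∀ t : ℕ, N ≤ t → (finrank k ↥(W ^ t) : ℤ) = s * t + 1 - p)
    (hs : s ≤ 2 * finrank k W - 4) : SaturationEstimates W s p := by
  obtain ⟨L, W, rfl, htop⟩ := exists_map_val_eq_adjoin_eq_top W
  obtain ⟨f, hf, rfl⟩ := hf
  obtain ⟨e, he, he1⟩ := h1
  obtain rfl : e = 1 := L.val.injective (he1.trans (map_one L.val).symm)
  rw [finrank_map_algHom] at hs
  replace hw (t : ℕ) (ht : N ≤ t) : (finrank k ↥(W ^ t) : ℤ) = s * t + 1 - p := by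
    rw [← finrank_map_algHom L.val, Submodule.map_pow, hw t ht]
  have : FiniteDimensional k W := Module.Finite.equiv
    (Submodule.equivMapOfInjective L.val.toLinearMap L.val.injective W).symm
  exact (hpar.of_map.saturationEstimates_of_adjoin_eq_top he hf htop hs0 hw hs).map he

end Transfer

/-! ### Linear forms on the curve -/

section LinearForms

open Module MvPolynomial

variable {r : ℕ}

theorem finite_homogeneousSubmodule (i : ℕ) :
    Module.Finite ℂ (homogeneousSubmodule (Fin r) ℂ i) := by
  rw [← homogeneousSubmodule_one_pow, homogeneousSubmodule_one_eq_span_X]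
  exact Module.Finite.iff_fg.2 ((Submodule.fg_span (Set.finite_range _)).pow i)

theorem homogeneousComponent_succ_X_mul (c : Fin r) (f : MPoly r) (i : ℕ) :
    homogeneousComponent (i + 1) (X c * f) = X c * homogeneousComponent i f := by
  have h := @DirectSum.coe_decompose_mul_add_of_left_mem ℕ (MPoly r) _ _ _ _ _
    (homogeneousSubmodule (Fin r) ℂ) 1 i _ MvPolynomial.gradedAlgebra (X c) f (isHomogeneous_X ℂ c)
  rw [add_comm, ← decomposition.decompose'_apply, ← decomposition.decompose'_apply]
  exact h

theorem degQ_one_pow (I : Ideal (MPoly r)) (i : ℕ) : degQ I 1 ^ i = degQ I i := by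
  rw [degQ, ← Submodule.map_pow, homogeneousSubmodule_one_pow, degQ]

theorem finrank_degQ_one {I : Ideal (MPoly r)} (hnd : Nondeg I) : finrank ℂ (degQ I 1) = r := by
  have hinj : Function.Injective
      ((Ideal.Quotient.mkₐ ℂ I).toLinearMap.domRestrict (homogeneousSubmodule (Fin r) ℂ 1)) := by
    rw [injective_iff_map_eq_zero]
    rintro ⟨f, hf⟩ h
    exact Subtype.ext (hnd f hf (Ideal.Quotient.eq_zero_iff_mem.1 h))
  rw [degQ, ← LinearMap.range_domRestrict, LinearMap.finrank_range_of_inj hinj,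
    homogeneousSubmodule_one_eq_span_X,
    finrank_span_eq_card (MvPolynomial.linearIndependent_X (Fin r) ℂ), Fintype.card_fin]

variable (I : Ideal (MPoly r))

/-- Polynomials as rational functions on the affine cone over `V(I)`. -/
noncomputable def toFrac : MPoly r →ₐ[ℂ] FractionRing (MPoly r ⧸ I) :=
  (IsScalarTower.toAlgHom ℂ (MPoly r ⧸ I) (FractionRing (MPoly r ⧸ I))).comp
    (Ideal.Quotient.mkₐ ℂ I)

theorem toFrac_eq_iff {I : Ideal (MPoly r)} {f g : MPoly r} :
    toFrac I f = toFrac I g ↔ Ideal.Quotient.mk I f = Ideal.Quotient.mk I g :=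
  (IsFractionRing.injective (MPoly r ⧸ I) (FractionRing (MPoly r ⧸ I))).eq_iff

theorem exists_toFrac_X_ne_zero {I : Ideal (MPoly r)} (hnd : Nondeg I) (hr : 0 < r) :
    ∃ c, toFrac I (X c) ≠ 0 := by
  refine ⟨⟨0, hr⟩, fun h => ?_⟩
  rw [← map_zero (toFrac I), toFrac_eq_iff, map_zero, Ideal.Quotient.eq_zero_iff_mem] at h
  exact X_ne_zero _ (hnd _ (isHomogeneous_X ℂ _) h)

variable [I.IsPrime]

/-- The linear forms on `V(I)`, dehomogenized by the coordinate `x_c`. Their powers `W ^ i` are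
copies of the graded pieces of the coordinate ring inside one field. -/
noncomputable def affineForms (c : Fin r) : Submodule ℂ (FractionRing (MPoly r ⧸ I)) :=
  Submodule.span ℂ {(toFrac I (X c))⁻¹} *
    (homogeneousSubmodule (Fin r) ℂ 1).map (toFrac I).toLinearMap

variable {I}

theorem finite_affineForms (c : Fin r) : FiniteDimensional ℂ (affineForms I c) := by
  have := finite_homogeneousSubmodule (r := r) 1
  exact Module.Finite.iff_fg.2 ((Submodule.fg_span_singleton _).mul
    ((Module.Finite.iff_fg.1 this).map _))

variable {c : Fin r} {i : ℕ}

theorem mem_affineForms_pow {y : FractionRing (MPoly r ⧸ I)} :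
    y ∈ affineForms I c ^ i ↔
      ∃ a ∈ homogeneousSubmodule (Fin r) ℂ i, toFrac I a / toFrac I (X c) ^ i = y := by
  rw [affineForms, mul_pow, Submodule.span_pow, Set.singleton_pow, ← Submodule.map_pow,
    homogeneousSubmodule_one_pow, Submodule.mem_span_singleton_mul, inv_pow]
  simp only [div_eq_inv_mul]
  exact ⟨fun ⟨_, ⟨a, ha, hz⟩, hy⟩ => ⟨a, ha, hz ▸ hy⟩, fun ⟨a, ha, hy⟩ => ⟨_, ⟨a, ha, rfl⟩, hy⟩⟩

theorem div_pow_mem_affineForms_pow {a : MPoly r} (ha : a ∈ homogeneousSubmodule (Fin r) ℂ i) :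
    toFrac I a / toFrac I (X c) ^ i ∈ affineForms I c ^ i :=
  mem_affineForms_pow.2 ⟨a, ha, rfl⟩

theorem div_mem_affineForms {a : MPoly r} (ha : a ∈ homogeneousSubmodule (Fin r) ℂ 1) :
    toFrac I a / toFrac I (X c) ∈ affineForms I c := by
  rw [← pow_one (affineForms I c), mem_affineForms_pow]
  exact ⟨a, ha, by rw [pow_one]⟩

theorem one_mem_affineForms (hc : toFrac I (X c) ≠ 0) : 1 ∈ affineForms I c := by
  rw [← div_self hc]
  exact div_mem_affineForms (isHomogeneous_X ℂ c)

/-- Division by `x_c ^ i` identifies the degree `i` part of the coordinate ring with `W ^ i`. -/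
theorem finrank_affineForms_pow (hc : toFrac I (X c) ≠ 0) (i : ℕ) :
    finrank ℂ ↥(affineForms I c ^ i) = finrank ℂ (degQ I i) := by
  let L : (MPoly r ⧸ I) →ₗ[ℂ] FractionRing (MPoly r ⧸ I) :=
    (LinearMap.mulLeft ℂ (toFrac I (X c) ^ i)⁻¹).comp
      (IsScalarTower.toAlgHom ℂ (MPoly r ⧸ I) (FractionRing (MPoly r ⧸ I))).toLinearMap
  have hL : Function.Injective L :=
    (mul_right_injective₀ (inv_ne_zero (pow_ne_zero i hc))).comp
      (IsFractionRing.injective (MPoly r ⧸ I) (FractionRing (MPoly r ⧸ I)))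
  have hmap : (degQ I i).map L = affineForms I c ^ i := by
    ext y
    rw [mem_affineForms_pow, degQ, ← Submodule.map_comp]
    exact exists_congr fun a => and_congr_right fun _ => by rw [div_eq_inv_mul]; rfl
  rw [← hmap]
  exact (Submodule.equivMapOfInjective L hL _).finrank_eq.symm

theorem div_pow_mem_affineForms_pow_of_mem_span (hc : toFrac I (X c) ≠ 0) (hI : IsHomogIdeal I)
    {a : MPoly r} (ha : a ∈ homogeneousSubmodule (Fin r) ℂ (i + 1))
    (hac : Ideal.Quotient.mk I a ∈ Ideal.span {Ideal.Quotient.mk I (X c)}) :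
    toFrac I a / toFrac I (X c) ^ (i + 1) ∈ affineForms I c ^ i := by
  obtain ⟨d, hd⟩ := Ideal.mem_span_singleton'.1 hac
  obtain ⟨d, rfl⟩ := Ideal.Quotient.mk_surjective d
  rw [← map_mul, Ideal.Quotient.eq] at hd
  have hcomp := hI _ hd (i + 1)
  rw [map_sub, mul_comm, homogeneousComponent_succ_X_mul,
    homogeneousComponent_of_mem (n := i + 1) (m := i + 1) ha, if_pos rfl,
    ← Ideal.Quotient.eq, ← toFrac_eq_iff, map_mul] at hcomp
  rw [← hcomp, pow_succ', mul_div_mul_left _ _ hc]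
  exact div_pow_mem_affineForms_pow (homogeneousComponent_mem i d)

/-- Take `f = g / x_c` with `g` a linear form which is regular on `R / (I, x_c)` in high degrees. -/
theorem exists_isParameter_affineForms (hc : toFrac I (X c) ≠ 0) (hI : IsHomogIdeal I) {s p : ℤ}
    {N : ℕ} (hs0 : 0 < s)
    (hw : ∀ t : ℕ, N ≤ t → (finrank ℂ ↥(affineForms I c ^ t) : ℤ) = s * t + 1 - p) :
    ∃ f ∈ affineForms I c, IsParameter (affineForms I c) f := by
  have := finite_affineForms (I := I) c
  obtain ⟨_, ⟨g, hg, rfl⟩, N', hN'⟩ := exists_mem_forall_mul_mem_imp_mem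
    (degQ I 1) (Ideal.span {Ideal.Quotient.mk I (X c)})
  refine ⟨_, div_mem_affineForms hg, isParameter_of_forall_mul_mem (N := max N N')
    (one_mem_affineForms hc) (div_mem_affineForms hg) hs0 (fun t ht => hw t (by omega)) ?_⟩
  intro i hi z hz hfz
  obtain ⟨a, ha, rfl⟩ := mem_affineForms_pow.1 hz
  obtain ⟨b, -, hab⟩ := mem_affineForms_pow.1 hfz
  have hga : toFrac I (g * a) = toFrac I (X c * b) := by
    rw [map_mul, map_mul]
    field_simp at hab
    rw [← hab, mul_comm]
  refine div_pow_mem_affineForms_pow_of_mem_span hc hI ha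
    (hN' (i + 1) (by omega) _ (degQ_one_pow I (i + 1) ▸ ⟨a, ha, rfl⟩) ?_)
  refine Ideal.mem_span_singleton.2 ⟨Ideal.Quotient.mk I b, ?_⟩
  rw [← map_mul, ← toFrac_eq_iff.1 hga]
  exact (map_mul (Ideal.Quotient.mk I) g a).symm

end LinearForms

/-! ### Sections as graded homomorphisms -/

section GlobalSections

open Module MvPolynomial

theorem exists_linearMap_algebraMap_eq_smul {R A K : Type*} [CommRing R] [CommRing A] [CommRing K]
    [Algebra R A] [Algebra A K] [Algebra R K] [IsScalarTower R A K]
    (hinj : Function.Injective (algebraMap A K)) {J : Ideal R} {S : Set R} (hJ : J = Ideal.span S)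
    {g : K} (hg : ∀ a ∈ S, ∃ b : A, algebraMap A K b = a • g) :
    ∃ φ : J →ₗ[R] A, ∀ a : J, algebraMap A K (φ a) = (a : R) • g := by
  let ι : A →ₗ[R] K := (IsScalarTower.toAlgHom R A K).toLinearMap
  let μ : R →ₗ[R] K := LinearMap.toSpanSingleton R K g
  have hrange : J ≤ (LinearMap.range ι).comap μ := hJ ▸ Ideal.span_le.2 hg
  let e := LinearEquiv.ofInjective ι hinj
  refine ⟨e.symm.toLinearMap.comp ((μ.domRestrict J).codRestrict _ fun a => hrange a.2), ?_⟩
  exact fun a => congrArg Subtype.val (e.apply_symm_apply ⟨μ a, hrange a.2⟩)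

variable {r : ℕ} {I : Ideal (MPoly r)} {c : Fin r} {k t : ℕ}

theorem degQZ_natCast (i : ℕ) : degQZ I (i : ℤ) = degQ I i := by
  simp [degQZ]

theorem mem_mId_pow_of_mem_homogeneousSubmodule {j : ℕ} {a : MPoly r}
    (ha : a ∈ homogeneousSubmodule (Fin r) ℂ j) (hkj : k ≤ j) : a ∈ mId r ^ k := by
  refine (mem_pow_idealOfVars_iff k a).2 fun x hx => ?_
  rw [Finsupp.degree_eq_weight_one]
  exact hkj.trans_eq (ha (mem_support_iff.1 hx)).symm

theorem eq_zero_of_mem_mId_pow {j : ℕ} {a : MPoly r}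
    (ha : a ∈ homogeneousSubmodule (Fin r) ℂ j) (hjk : j < k) (hak : a ∈ mId r ^ k) : a = 0 := by
  refine support_eq_empty.1 (Finset.eq_empty_of_forall_notMem fun x hx => hjk.not_ge ?_)
  have hxk := (mem_pow_idealOfVars_iff k a).1 hak x hx
  rw [Finsupp.degree_eq_weight_one] at hxk
  exact hxk.trans_eq (ha (mem_support_iff.1 hx))

theorem mId_pow_eq_span (k : ℕ) :
    mId r ^ k = Ideal.span (homogeneousSubmodule (Fin r) ℂ k : Set (MPoly r)) := by
  refine le_antisymm ?_
    (Ideal.span_le.2 fun a ha => mem_mId_pow_of_mem_homogeneousSubmodule ha le_rfl)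
  refine (pow_idealOfVars_eq_span (σ := Fin r) (R := ℂ) k).trans_le (Ideal.span_mono ?_)
  rintro _ ⟨x, hx, rfl⟩
  exact isHomogeneous_monomial _ hx

theorem X_pow_mem_mId_pow (c : Fin r) (k : ℕ) : X c ^ k ∈ mId r ^ k :=
  mem_mId_pow_of_mem_homogeneousSubmodule (isHomogeneous_X_pow c k) le_rfl

variable [I.IsPrime]

variable (I c k t) in
/-- The rational function `φ(x_c ^ k) / x_c ^ (k + t)` of degree zero attached to a homomorphism
`φ : m ^ k → R / I` of degree `t`. -/
noncomputable def homToFrac :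
    ((mId r ^ k : Ideal (MPoly r)) →ₗ[MPoly r] (MPoly r ⧸ I)) →ₗ[ℂ]
      FractionRing (MPoly r ⧸ I) :=
  (LinearMap.mulLeft ℂ (toFrac I (X c) ^ (k + t))⁻¹).comp
    ((IsScalarTower.toAlgHom ℂ (MPoly r ⧸ I) (FractionRing (MPoly r ⧸ I))).toLinearMap.comp
      ((LinearMap.applyₗ' ℂ ⟨X c ^ k, X_pow_mem_mId_pow c k⟩)))

theorem homToFrac_apply (φ : (mId r ^ k : Ideal (MPoly r)) →ₗ[MPoly r] (MPoly r ⧸ I)) :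
    homToFrac I c k t φ = algebraMap _ (FractionRing (MPoly r ⧸ I))
      (φ ⟨X c ^ k, X_pow_mem_mId_pow c k⟩) / toFrac I (X c) ^ (k + t) :=
  (div_eq_inv_mul _ _).symm

theorem homToFrac_mul (hc : toFrac I (X c) ≠ 0)
    (φ : (mId r ^ k : Ideal (MPoly r)) →ₗ[MPoly r] (MPoly r ⧸ I)) (a : (mId r ^ k : Ideal _)) :
    homToFrac I c k t φ * toFrac I a =
      algebraMap _ (FractionRing (MPoly r ⧸ I)) (φ a) / toFrac I (X c) ^ t := by
  have hsmul : (a : MPoly r) • φ ⟨X c ^ k, X_pow_mem_mId_pow c k⟩ = (X c ^ k : MPoly r) • φ a := by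
    rw [← map_smul, ← map_smul]
    exact congrArg φ (Subtype.ext (mul_comm _ _))
  have hmul (f : MPoly r) (b : MPoly r ⧸ I) :
      algebraMap _ (FractionRing (MPoly r ⧸ I)) (f • b) =
        toFrac I f * algebraMap _ (FractionRing (MPoly r ⧸ I)) b :=
    map_mul (algebraMap _ (FractionRing (MPoly r ⧸ I))) (Ideal.Quotient.mk I f) b
  have hfrac := congrArg (algebraMap _ (FractionRing (MPoly r ⧸ I))) hsmul
  rw [hmul, hmul, map_pow] at hfrac
  rw [homToFrac_apply, div_mul_eq_mul_div, mul_comm, hfrac, pow_add,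
    mul_div_mul_left _ _ (pow_ne_zero k hc)]

theorem homToFrac_injective (hc : toFrac I (X c) ≠ 0) :
    Function.Injective (homToFrac I c k t) := by
  refine (injective_iff_map_eq_zero _).2 fun φ hφ => LinearMap.ext fun a => ?_
  have hdiv := homToFrac_mul (t := t) hc φ a
  rw [hφ, zero_mul, eq_comm, div_eq_zero_iff] at hdiv
  exact (map_eq_zero_iff _ (IsFractionRing.injective (MPoly r ⧸ I) (FractionRing (MPoly r ⧸ I)))).1
    (hdiv.resolve_right (pow_ne_zero t hc))

theorem homToFrac_mem_div (hc : toFrac I (X c) ≠ 0)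
    {φ : (mId r ^ k : Ideal (MPoly r)) →ₗ[MPoly r] (MPoly r ⧸ I)} (hφ : φ ∈ gradedHomSub I k t) :
    homToFrac I c k t φ ∈ affineForms I c ^ (k + t) / affineForms I c ^ k := by
  rw [Submodule.mem_div_iff_forall_mul_mem]
  intro y hy
  obtain ⟨a, ha, rfl⟩ := mem_affineForms_pow.1 hy
  have hak := mem_mId_pow_of_mem_homogeneousSubmodule ha le_rfl
  have hφa := hφ k a hak ha
  rw [← Nat.cast_add, degQZ_natCast] at hφa
  obtain ⟨b, hb, hba⟩ := hφa
  refine mem_affineForms_pow.2 ⟨b, hb, ?_⟩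
  rw [← mul_div_assoc, homToFrac_mul hc φ ⟨a, hak⟩, ← hba, div_div, ← pow_add, add_comm k]
  rfl

theorem exists_toFrac_eq_mul (hc : toFrac I (X c) ≠ 0) {f : FractionRing (MPoly r ⧸ I)}
    (hf : f ∈ affineForms I c ^ (k + t) / affineForms I c ^ k) {j : ℕ} {a : MPoly r}
    (ha : a ∈ homogeneousSubmodule (Fin r) ℂ (k + j)) :
    ∃ b ∈ homogeneousSubmodule (Fin r) ℂ (k + j + t),
      toFrac I b = toFrac I a * (f * toFrac I (X c) ^ t) := by
  have hle := monotone_pow_add_div_pow (affineForms I c) t (Nat.le_add_right k j)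
  obtain ⟨b, hb, hba⟩ := mem_affineForms_pow.1
    (Submodule.mem_div_iff_forall_mul_mem.1 (hle hf) _ (div_pow_mem_affineForms_pow ha))
  refine ⟨b, hb, ?_⟩
  rw [div_eq_iff (pow_ne_zero _ hc)] at hba
  rw [hba, pow_add _ (k + j)]
  field_simp

/-- The homomorphism recovered from `f` is multiplication by `f * x_c ^ t`. -/
theorem map_homToFrac (hc : toFrac I (X c) ≠ 0) (k t : ℕ) :
    (gradedHomSub I k t).map (homToFrac I c k t) =
      affineForms I c ^ (k + t) / affineForms I c ^ k := by
  have hinj := IsFractionRing.injective (MPoly r ⧸ I) (FractionRing (MPoly r ⧸ I))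
  refine le_antisymm (Submodule.map_le_iff_le_comap.2 fun φ => homToFrac_mem_div hc) fun f hf => ?_
  have hsmul (a : MPoly r) : a • (f * toFrac I (X c) ^ t) = toFrac I a * (f * toFrac I (X c) ^ t) :=
    Algebra.smul_def _ _
  obtain ⟨φ, hφ⟩ := exists_linearMap_algebraMap_eq_smul (A := MPoly r ⧸ I) hinj
    (mId_pow_eq_span k) (g := f * toFrac I (X c) ^ t) fun a ha => by
      obtain ⟨b, -, hb⟩ := exists_toFrac_eq_mul (j := 0) hc hf ha
      exact ⟨Ideal.Quotient.mk I b, hb.trans (hsmul a).symm⟩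
  simp only [hsmul] at hφ
  refine ⟨φ, fun j a ha haj => ?_, ?_⟩
  · rcases lt_or_ge j k with hjk | hjk
    · have ha0 : (⟨a, ha⟩ : (mId r ^ k : Ideal (MPoly r))) = 0 :=
        Subtype.ext (eq_zero_of_mem_mId_pow haj hjk ha)
      rw [ha0, map_zero]
      exact Submodule.zero_mem _
    · obtain ⟨j, rfl⟩ := Nat.exists_eq_add_of_le hjk
      obtain ⟨b, hb, hba⟩ := exists_toFrac_eq_mul hc hf haj
      rw [← Nat.cast_add, degQZ_natCast]
      exact ⟨b, hb, hinj (hba.trans (hφ ⟨a, ha⟩).symm)⟩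
  · rw [homToFrac_apply, hφ, div_eq_iff (pow_ne_zero _ hc), map_pow, pow_add]
    ring

theorem finrank_gradedHomSub (hc : toFrac I (X c) ≠ 0) (k t : ℕ) :
    finrank ℂ (gradedHomSub I k t) =
      finrank ℂ ↥(affineForms I c ^ (k + t) / affineForms I c ^ k) := by
  rw [← map_homToFrac hc k t]
  exact (Submodule.equivMapOfInjective _ (homToFrac_injective hc) _).finrank_eq

/-- Finite generation makes the increasing union `⋃ₖ W ^ (k + t) / W ^ k` stationary. -/
theorem h0Nat_eq_finrank_satPow (hc : toFrac I (X c) ≠ 0) (hfg : (satPow (affineForms I c) t).FG) :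
    h0Nat I t = finrank ℂ (satPow (affineForms I c) t) := by
  have : FiniteDimensional ℂ (satPow (affineForms I c) t) := Module.Finite.iff_fg.2 hfg
  have hle (k : ℕ) : affineForms I c ^ (k + t) / affineForms I c ^ k ≤ satPow (affineForms I c) t :=
    le_iSup (fun j => affineForms I c ^ (j + t) / affineForms I c ^ j) k
  obtain ⟨k, hk⟩ := exists_mul_pow_le_of_fg hfg le_rfl
  have hub (j : ℕ) : finrank ℂ (gradedHomSub I j t) ≤ finrank ℂ (satPow (affineForms I c) t) :=
    (finrank_gradedHomSub hc j t).trans_le (Submodule.finrank_mono (hle j))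
  refine le_antisymm (ciSup_le hub) ?_
  rw [← (hle k).antisymm (Submodule.le_div_iff_mul_le.2 hk), ← finrank_gradedHomSub hc]
  exact le_ciSup (f := fun j => finrank ℂ (gradedHomSub I j t)) ⟨_, Set.forall_mem_range.2 hub⟩ k

end GlobalSections

/-! ### Cohomology of the curve -/

section CurveCohomology

open Module MvPolynomial

theorem le_max_zero_add_one_sub {a : ℤ → ℤ} (h : ∀ i, 2 ≤ i → a i ≤ max 0 (a (i - 1) - 1)) {i : ℤ}
    (hi : 1 ≤ i) : a i ≤ max 0 (a 1 + 1 - i) := by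
  induction i, hi using Int.leInduction with
  | base => exact le_max_of_le_right (by linarith)
  | succ i hi ih =>
    have hstep := h (i + 1) (by omega)
    rw [add_sub_cancel_right] at hstep
    omega

variable {r : ℕ} {I : Ideal (MPoly r)} [I.IsPrime] {c : Fin r} {s p : ℤ}

theorem hilbNat_natCast (hc : toFrac I (X c) ≠ 0) (t : ℕ) :
    hilbNat I t = finrank ℂ ↥(affineForms I c ^ t) := by
  rw [hilbNat, degQZ_natCast, finrank_affineForms_pow hc]

theorem h1INat_natCast (hc : toFrac I (X c) ≠ 0) {t : ℕ} (hfg : (satPow (affineForms I c) t).FG) :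
    (h1INat I t : ℤ) =
      finrank ℂ (satPow (affineForms I c) t) - finrank ℂ ↥(affineForms I c ^ t) := by
  have : FiniteDimensional ℂ (satPow (affineForms I c) t) := Module.Finite.iff_fg.2 hfg
  rw [h1INat, h0Nat_eq_finrank_satPow hc hfg, hilbNat_natCast hc,
    Nat.cast_sub (Submodule.finrank_mono (pow_le_satPow _ t))]

theorem finrank_affineForms (hc : toFrac I (X c) ≠ 0) (hnd : Nondeg I) :
    finrank ℂ (affineForms I c) = r := by
  rw [← pow_one (affineForms I c), finrank_affineForms_pow hc, finrank_degQ_one hnd]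

theorem CurveInv.saturationEstimates (hinv : CurveInv I s p) (hc : toFrac I (X c) ≠ 0)
    (hI : IsHomogIdeal I) (hnd : Nondeg I) (hs0 : 0 < s) (hs : s ≤ 2 * (r : ℤ) - 4) :
    SaturationEstimates (affineForms I c) s p := by
  obtain ⟨N, hN⟩ := hinv
  have hw (t : ℕ) (ht : N.toNat ≤ t) :
      (finrank ℂ ↥(affineForms I c ^ t) : ℤ) = s * t + 1 - p := by
    rw [← hilbNat_natCast hc, ← hN t (by omega), hilbZ]
  have := finite_affineForms (I := I) c
  obtain ⟨f, hf, hpar⟩ := exists_isParameter_affineForms hc hI hs0 hw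
  exact hpar.saturationEstimates (one_mem_affineForms hc) hf hs0.ne' hw
    (by rwa [finrank_affineForms hc hnd])

end CurveCohomology

/-- Proposition 3.1.  Let `Σ ⊆ ℙ^{r-1}` be a nondegenerate integral curve of
degree `s` with arithmetic genus `π`, where `r-1 ≤ s ≤ 2r-4`.  Then `π ≤ π₀ = s-r+1`, and:
(i) `h¹(Σ, O_Σ(i)) = 0` for `i ≥ 1` (i.e. `h⁰(Σ, O_Σ(i))` equals `si+1-π`);
(ii) `h¹(ℙ^{r-1}, I_Σ(1)) = π₀ - π`;
(iii) `h¹(ℙ^{r-1}, I_Σ(i)) ≤ max(0, h¹(ℙ^{r-1}, I_Σ(i-1)) - 1)` for `i ≥ 2`; and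
(iv) `h¹(ℙ^{r-1}, I_Σ(i)) ≤ max(0, π₀-π+1-i)` for `i ≥ 1`. -/
theorem statement_7 (r : ℕ) (s π : ℤ)
    (hs1 : (r : ℤ) - 1 ≤ s) (hs2 : s ≤ 2 * (r : ℤ) - 4)
    (ISig : Ideal (MPoly r))
    (hcurve : IsCurve ISig) (hnd : Nondeg ISig) (hinv : CurveInv ISig s π) :
    π ≤ s - (r : ℤ) + 1 ∧
    (∀ i : ℤ, 1 ≤ i → (h0Nat ISig i : ℤ) = s * i + 1 - π) ∧
    (h1INat ISig 1 : ℤ) = (s - (r : ℤ) + 1) - π ∧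
    (∀ i : ℤ, 2 ≤ i → (h1INat ISig i : ℤ) ≤ max 0 ((h1INat ISig (i - 1) : ℤ) - 1)) ∧
    (∀ i : ℤ, 1 ≤ i → (h1INat ISig i : ℤ) ≤ max 0 ((s - (r : ℤ) + 1) - π + 1 - i)) := by
  obtain ⟨hI, hprime, -⟩ := hcurve
  obtain ⟨c, hc⟩ := exists_toFrac_X_ne_zero hnd (by omega)
  have hest := hinv.saturationEstimates hc hI hnd (by omega) hs2
  have h0 (i : ℤ) (hi : 1 ≤ i) : (h0Nat ISig i : ℤ) = s * i + 1 - π := by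
    lift i to ℕ using by omega
    rw [h0Nat_eq_finrank_satPow hc (hest.fg i), hest.finrank_eq i (by omega)]
  have h1 : (h1INat ISig 1 : ℤ) = (s - (r : ℤ) + 1) - π := by
    rw [← Nat.cast_one, h1INat_natCast hc (hest.fg 1), hest.finrank_eq 1 le_rfl, pow_one,
      finrank_affineForms hc hnd]
    push_cast
    ring
  have hdesc (i : ℤ) (hi : 2 ≤ i) :
      (h1INat ISig i : ℤ) ≤ max 0 ((h1INat ISig (i - 1) : ℤ) - 1) := by
    obtain ⟨n, rfl⟩ : ∃ n : ℕ, i = (n + 1 : ℕ) := ⟨(i - 1).toNat, by omega⟩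
    rw [Nat.cast_succ, add_sub_cancel_right, ← Nat.cast_succ, h1INat_natCast hc (hest.fg _),
      h1INat_natCast hc (hest.fg n)]
    exact hest.finrank_sub_le n (by omega)
  refine ⟨by omega, h0, h1, hdesc, fun i hi => ?_⟩
  rw [← h1]
  exact le_max_zero_add_one_sub (a := fun i => h1INat ISig i) hdesc hi
end

section
/- Let r, d, s, π be integers with r ≥ 4, r−1 ≤ s ≤ 2r−4, 0 ≤ π ≤ π₀ := s−r+1, and assume m ≥ π₀ − π (where d−1 = ms+ε, 0 ≤ ε ≤ s−1). Then ∑_{i=1}^{∞} (d − h_{r,d,s,π}(i)) = G*(r,d,s,π, −binom(π₀−π+1, 2)) (the sum is finite since h_{r,d,s,π}(i) = d for i ≥ m+2). -/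
/-!
Write `k = π₀ - π`, so that `0 ≤ k ≤ m`. For `1 ≤ i ≤ m` the relation `d - 1 = m s + ε` turns the
summand into `(ε + π) + (m - i) s + max 0 (k + 1 - i)`. Both `m - i` and `max 0 (k + 1 - i)` are
cases of the truncated staircase `max 0 (c - i)`, whose sum over `1 ≤ i ≤ m` is `binom(c, 2)`
whenever `0 ≤ c ≤ m + 1`: take `c = m` and `c = k + 1`. The term `i = m + 1` contributes the
remaining maximum in `G*`, and all later terms vanish.
-/

open scoped BigOperators

section BinomialSum

open Finset

theorem two_mul_binom2 (z : ℤ) : 2 * binom2 z = z * (z - 1) :=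
  Int.mul_ediv_cancel' (Int.even_mul_pred_self z).two_dvd

theorem binom2_add_one (z : ℤ) : binom2 (z + 1) = binom2 z + z := by
  linarith [two_mul_binom2 z, two_mul_binom2 (z + 1)]

theorem max_zero_add_one_sub (k i : ℤ) :
    max 0 (k + 1 - i) = max 0 (k - i) + if i ≤ k then 1 else 0 := by
  split_ifs <;> omega

theorem sum_Icc_ite_le {k m : ℤ} (hk : 0 ≤ k) (hkm : k ≤ m) :
    ∑ i ∈ Icc 1 m, (if i ≤ k then 1 else 0 : ℤ) = k := by
  have hfilter : (Icc 1 m).filter (· ≤ k) = Icc 1 k := by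
    ext i
    simp only [mem_filter, mem_Icc]
    omega
  rw [sum_boole, hfilter, Int.card_Icc_of_le _ _ (by omega)]
  ring

theorem sum_Icc_max_zero_sub {k m : ℤ} (hk : 0 ≤ k) (hkm : k ≤ m + 1) :
    ∑ i ∈ Icc 1 m, max 0 (k - i) = binom2 k := by
  induction k, hk using Int.leInduction with
  | base =>
    refine sum_eq_zero fun i hi => max_eq_left ?_
    linarith [(mem_Icc.mp hi).1]
  | succ k hk ih =>
    simp_rw [max_zero_add_one_sub, sum_add_distrib]
    rw [ih (by omega), sum_Icc_ite_le hk (by omega), binom2_add_one]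

theorem sum_Icc_sub {m : ℤ} (hm : 0 ≤ m) : ∑ i ∈ Icc 1 m, (m - i) = binom2 m := by
  rw [← sum_Icc_max_zero_sub hm (by omega : m ≤ m + 1)]
  refine sum_congr rfl fun i hi => (max_eq_right ?_).symm
  linarith [(mem_Icc.mp hi).2]

end BinomialSum

theorem finsum_mem_Ici_eq_sum_Icc {α M : Type*} [LinearOrder α] [LocallyFiniteOrder α]
    [AddCommMonoid M] {f : α → M} {a b : α} (hf : ∀ i, b < i → f i = 0) :
    ∑ᶠ i ∈ Set.Ici a, f i = ∑ i ∈ Finset.Icc a b, f i := by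
  refine finsum_mem_eq_sum_of_inter_support_eq f (Set.ext fun i => ?_)
  have hle : f i ≠ 0 → i ≤ b := fun hi => not_lt.mp (mt (hf i) hi)
  simp only [Set.mem_inter_iff, Set.mem_Ici, Function.mem_support, Finset.coe_Icc, Set.mem_Icc]
  tauto

section HilbertDefect

variable {r d s π i : ℤ}

theorem sub_hF_of_le_ediv (h1 : 1 ≤ i) (hi : i ≤ (d - 1) / s) :
    d - hF r d s π i
      = ((d - 1) % s + π) + ((d - 1) / s - i) * s + max 0 (s - r + 1 - π + 1 - i) := by
  rw [hF, if_pos ⟨h1, hi⟩, sub_add_eq_add_sub (s - r + 1 - π) i 1]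
  linear_combination -Int.ediv_mul_add_emod (d - 1) s

theorem sub_hF_ediv_add_one :
    d - hF r d s π ((d - 1) / s + 1) = max 0 ((2 * π - (s - 1 - (d - 1) % s)) / 2) := by
  rw [hF, if_neg (by omega), if_pos rfl, sub_sub_cancel]

theorem sub_hF_of_ediv_add_one_lt (hi : (d - 1) / s + 1 < i) : d - hF r d s π i = 0 := by
  rw [hF, if_neg (by omega), if_neg (by omega), if_pos (by omega), sub_self]

theorem sum_Icc_sub_hF (hπ : π ≤ s - r + 1) (hm : s - r + 1 - π ≤ (d - 1) / s) :
    ∑ i ∈ Finset.Icc 1 ((d - 1) / s), (d - hF r d s π i)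
      = binom2 ((d - 1) / s) * s + ((d - 1) / s) * ((d - 1) % s + π)
        + binom2 (s - r + 1 - π + 1) := by
  have hm0 : 0 ≤ (d - 1) / s := by omega
  calc
    _ = ∑ i ∈ Finset.Icc 1 ((d - 1) / s), (((d - 1) % s + π) + ((d - 1) / s - i) * s
          + max 0 (s - r + 1 - π + 1 - i)) :=
      Finset.sum_congr rfl fun i hi =>
        sub_hF_of_le_ediv (Finset.mem_Icc.mp hi).1 (Finset.mem_Icc.mp hi).2
    _ = (d - 1) / s * ((d - 1) % s + π) + binom2 ((d - 1) / s) * s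
          + binom2 (s - r + 1 - π + 1) := by
      rw [Finset.sum_add_distrib, Finset.sum_add_distrib, ← Finset.sum_mul, sum_Icc_sub hm0,
        sum_Icc_max_zero_sub (by omega) (by omega), Finset.sum_const, nsmul_eq_mul,
        Int.card_Icc_of_le _ _ (by omega), add_sub_cancel_right]
    _ = _ := by ring

end HilbertDefect

theorem statement_8_general {r d s π m ε : ℤ} (hd : d - 1 = m * s + ε) (hε : 0 ≤ ε)
    (hεs : ε < |s|) (hπ : π ≤ s - r + 1) (hm : s - r + 1 - π ≤ m) :
    ∑ᶠ i ∈ Set.Ici (1 : ℤ), (d - hF r d s π i)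
      = Gstar r d s π (-(binom2 (s - r + 1 - π + 1))) := by
  have hs : s ≠ 0 := abs_pos.mp (hε.trans_lt hεs)
  obtain ⟨rfl, -⟩ : (d - 1) / s = m ∧ (d - 1) % s = ε :=
    (Int.ediv_emod_unique'' hs).mpr ⟨by linear_combination -hd, hε, hεs⟩
  rw [finsum_mem_Ici_eq_sum_Icc fun i => sub_hF_of_ediv_add_one_lt,
    ← Finset.insert_Icc_right_eq_Icc_add_one (by omega), Finset.sum_insert (by simp),
    sub_hF_ediv_add_one, sum_Icc_sub_hF hπ hm, Gstar]
  ring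

/-- Lemma 3.2(1).  `∑_{i≥1} (d - h_{r,d,s,π}(i)) = G*(r,d,s,π,
-binom(π₀-π+1,2))` (the sum is finite since `h_{r,d,s,π}(i) = d` for `i ≥ m+2`). -/
theorem statement_8 (r d s π : ℤ) (hr : 4 ≤ r)
    (hs1 : r - 1 ≤ s) (hs2 : s ≤ 2 * r - 4)
    (hπ1 : 0 ≤ π) (hπ2 : π ≤ s - r + 1)
    (hm : s - r + 1 - π ≤ (d - 1) / s) :
    ∑ᶠ i ∈ Set.Ici (1 : ℤ), (d - hF r d s π i)
      = Gstar r d s π (-(binom2 (s - r + 1 - π + 1))) :=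
  statement_8_general (Int.ediv_mul_add_emod (d - 1) s).symm (Int.emod_nonneg _ (by omega))
    (Int.emod_lt_abs _ (by omega)) hπ2 hm
end
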